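/- arXiv:2501.18600 — 5 statements merged into one kernel-verified Lean document; each statement's English description precedes it below -/
import Mathlib

section
/- Let L = 2m+1 ≥ 3 be an odd integer and let U = U^{M,L}_L be the time-evolution operator of the L-state M-type Grover walk on the cycle with L vertices. Then the period of the walk equals 2L; that is, U^{2L} = I and U^n ≠ I for every integer n with 1 ≤ n < 2L. -/
open Matrix Polynomial

/-- The M-type Grover coin `A^{M,L}` for `L = 2m+1`: diagonal entries `-(2m-1)/L`,
off-diagonal entries `2/L`. -/
noncomputable def coinM (m : ℕ) : Matrix (Fin (2*m+1)) (Fin (2*m+1)) ℂ :=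
  fun i j => if i = j then (1 - 2*(m:ℂ)) / (2*(m:ℂ)+1) else 2 / (2*(m:ℂ)+1)

/-- The F-type Grover coin `A^{F,L}` for `L = 2m+1`: anti-diagonal entries `-(2m-1)/L`,
all other entries `2/L`. -/
noncomputable def coinF (m : ℕ) : Matrix (Fin (2*m+1)) (Fin (2*m+1)) ℂ :=
  fun i j => if (i : ℕ) + (j : ℕ) = 2*m then (1 - 2*(m:ℂ)) / (2*(m:ℂ)+1)
    else 2 / (2*(m:ℂ)+1)

/-- The time-evolution operator of the `L`-state (`L = 2m+1`) Grover walk with local coin `A`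
on the cycle `C_N`: entry at `((v,i),(w,j))` is `A i j` if `v ≡ w + (i - m) (mod N)`,
and `0` otherwise. -/
noncomputable def walkU (m N : ℕ) (A : Matrix (Fin (2*m+1)) (Fin (2*m+1)) ℂ) :
    Matrix ((ZMod N) × Fin (2*m+1)) ((ZMod N) × Fin (2*m+1)) ℂ :=
  fun p q => if p.1 = q.1 + ((p.2 : ℕ) : ZMod N) - (m : ZMod N) then A p.2 q.2 else 0

/-- `ζ_N = exp(2πi/N)`. -/
noncomputable def zetaN (N : ℕ) : ℂ := Complex.exp (2 * Real.pi * Complex.I / N)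

/-- The diagonal matrix `Z = diag(ζ_N^m, ζ_N^{m-1}, …, ζ_N^{-m})`. -/
noncomputable def Zmat (N m : ℕ) : Matrix (Fin (2*m+1)) (Fin (2*m+1)) ℂ :=
  Matrix.diagonal fun i => zetaN N ^ ((m : ℤ) - ((i : ℕ) : ℤ))

/-- The integer power `Z^k` of the diagonal matrix `Z`, defined for any `k ∈ ℤ`. -/
noncomputable def ZmatPow (N m : ℕ) (k : ℤ) : Matrix (Fin (2*m+1)) (Fin (2*m+1)) ℂ :=
  Matrix.diagonal fun i => zetaN N ^ ((((m : ℤ) - ((i : ℕ) : ℤ))) * k)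

/-- `f^{M,L}_{N,k}(x) = det(x·I_L − Z^k A^{M,L})`. -/
noncomputable def fMk (m N : ℕ) (k : ℤ) : Polynomial ℂ :=
  (ZmatPow N m k * coinM m).charpoly

/-- `f^{M,L}_N(x) = ∏_{k=0}^{N-1} f^{M,L}_{N,k}(x)`. -/
noncomputable def fM (m N : ℕ) : Polynomial ℂ :=
  ∏ k ∈ Finset.range N, fMk m N (k : ℤ)

/-- `f^{F,L}_{N,k}(x) = det(x·I_L − Z^k A^{F,L})`. -/
noncomputable def fFk (m N : ℕ) (k : ℤ) : Polynomial ℂ :=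
  (ZmatPow N m k * coinF m).charpoly

/-- `f^{F,L}_N(x) = ∏_{k=0}^{N-1} f^{F,L}_{N,k}(x)`. -/
noncomputable def fF (m N : ℕ) : Polynomial ℂ :=
  ∏ k ∈ Finset.range N, fFk m N (k : ℤ)

/-!
The walk operator is a product `s * c` of the shift `s` and the coin `c = 2P - 1`, where `P`
averages over the `L` directions. On the cycle with `L` vertices the steps `i - m` run exactly once
through `ℤ/Lℤ`, and this makes the conjugates `s ^ k * c * s ^ (-k)` commute pairwise. Moving all
shifts to the right gives `(s * c) ^ n = q * s ^ n`, where `q` is a product of commuting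
involutions, so `q ^ 2 = 1`. As `s` has order `L`, this yields `(s * c) ^ (2 * L) = 1`; conversely
`(s * c) ^ n = 1` forces `s ^ (2 * n) = 1`, hence `L ∣ n` because `L` is odd. Finally `n` is even
because `s * c` has the eigenvalue `-1`: a state which is constant along the vertices and whose sum
over the directions vanishes is fixed by `s` and negated by `c`.
-/

section ConjugatesCommute

variable {Γ : Type*} [Group Γ] {s c : Γ}

lemma commute_conj_zpow (hcomm : ∀ k : ℤ, Commute c (MulAut.conj (s ^ k) c)) (j k : ℤ) :
    Commute (MulAut.conj (s ^ j) c) (MulAut.conj (s ^ k) c) := by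
  have h := (hcomm (k - j)).map (MulAut.conj (s ^ j))
  rwa [← MulAut.mul_apply, ← map_mul, ← _root_.zpow_add, add_sub_cancel] at h

lemma mul_pow_succ_mul_inv_pow_succ (s c : Γ) (n : ℕ) :
    (s * c) ^ (n + 1) * (s ^ (n + 1))⁻¹ =
      (s * c) ^ n * (s ^ n)⁻¹ * MulAut.conj (s ^ ((n + 1 : ℕ) : ℤ)) c := by
  rw [MulAut.conj_apply, zpow_natCast, pow_succ (s * c), pow_succ s]
  group

lemma commute_mul_pow_mul_inv_pow (hcomm : ∀ k : ℤ, Commute c (MulAut.conj (s ^ k) c)) (n : ℕ)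
    (k : ℤ) : Commute ((s * c) ^ n * (s ^ n)⁻¹) (MulAut.conj (s ^ k) c) := by
  induction n with
  | zero => simp
  | succ n ih =>
    rw [mul_pow_succ_mul_inv_pow_succ]
    exact ih.mul_left (commute_conj_zpow hcomm _ k)

lemma mul_pow_mul_inv_pow_sq (hc : c ^ 2 = 1)
    (hcomm : ∀ k : ℤ, Commute c (MulAut.conj (s ^ k) c)) (n : ℕ) :
    ((s * c) ^ n * (s ^ n)⁻¹) ^ 2 = 1 := by
  induction n with
  | zero => simp
  | succ n ih =>
    rw [mul_pow_succ_mul_inv_pow_succ, (commute_mul_pow_mul_inv_pow hcomm n _).mul_pow, ih,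
      ← map_pow, hc, map_one, one_mul]

lemma orderOf_mul_dvd_two_mul_orderOf (hc : c ^ 2 = 1)
    (hcomm : ∀ k : ℤ, Commute c (MulAut.conj (s ^ k) c)) :
    orderOf (s * c) ∣ 2 * orderOf s := by
  have hsq := mul_pow_mul_inv_pow_sq hc hcomm (orderOf s)
  rw [pow_orderOf_eq_one, inv_one, mul_one, ← pow_mul, mul_comm] at hsq
  exact orderOf_dvd_of_pow_eq_one hsq

lemma orderOf_dvd_two_mul_orderOf_mul (hc : c ^ 2 = 1)
    (hcomm : ∀ k : ℤ, Commute c (MulAut.conj (s ^ k) c)) :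
    orderOf s ∣ 2 * orderOf (s * c) := by
  have hsq := mul_pow_mul_inv_pow_sq hc hcomm (orderOf (s * c))
  rw [pow_orderOf_eq_one, one_mul, inv_pow, inv_eq_one, ← pow_mul, mul_comm] at hsq
  exact orderOf_dvd_of_pow_eq_one hsq

theorem orderOf_mul_eq_two_mul_orderOf (hc : c ^ 2 = 1)
    (hcomm : ∀ k : ℤ, Commute c (MulAut.conj (s ^ k) c)) (hodd : Odd (orderOf s))
    (heven : Even (orderOf (s * c))) : orderOf (s * c) = 2 * orderOf s := by
  have hcop : Nat.Coprime 2 (orderOf s) := hodd.coprime_two_left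
  refine Nat.dvd_antisymm (orderOf_mul_dvd_two_mul_orderOf hc hcomm) ?_
  exact hcop.mul_dvd_of_dvd_of_dvd heven.two_dvd
    (hcop.symm.dvd_of_dvd_mul_left (orderOf_dvd_two_mul_orderOf_mul hc hcomm))

end ConjugatesCommute

section Shift

variable (K : Type*) {G ι : Type*} [Semiring K] [AddCommGroup G]

/-- The shift operator of a quantum walk on an additive group `G` with directions `ι`, where
direction `i` moves the walker by `d i`: the amplitude at `v` comes from `v - d i`. -/
def walkShift (d : ι → G) : (G × ι → K) ≃ₗ[K] (G × ι → K) :=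
  LinearEquiv.funCongrLeft K K
    { toFun := fun p => (p.1 - d p.2, p.2)
      invFun := fun p => (p.1 + d p.2, p.2)
      left_inv := fun p => by simp
      right_inv := fun p => by simp }

variable {K}

lemma walkShift_apply (d : ι → G) (ψ : G × ι → K) (v : G) (i : ι) :
    walkShift K d ψ (v, i) = ψ (v - d i, i) := rfl

lemma walkShift_inv_apply (d : ι → G) (ψ : G × ι → K) (v : G) (i : ι) :
    (walkShift K d)⁻¹ ψ (v, i) = ψ (v + d i, i) := rfl

lemma walkShift_zpow_apply (d : ι → G) (k : ℤ) (ψ : G × ι → K) (v : G) (i : ι) :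
    (walkShift K d ^ k) ψ (v, i) = ψ (v - k • d i, i) := by
  induction k generalizing ψ with
  | zero => simp
  | succ k ih =>
    rw [_root_.zpow_add_one, LinearEquiv.mul_apply, ih, walkShift_apply, add_smul, one_smul,
      sub_sub]
  | pred k ih =>
    rw [_root_.zpow_sub_one, LinearEquiv.mul_apply, ih, walkShift_inv_apply, sub_smul, one_smul,
      sub_sub_eq_add_sub, add_sub_right_comm]

lemma walkShift_pow_eq_one_iff [Nontrivial K] {d : ι → G} (hd : Function.Surjective d) (n : ℕ) :
    walkShift K d ^ n = 1 ↔ ∀ x : G, n • x = 0 := by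
  classical
  refine ⟨fun h => hd.forall.2 fun i => ?_, fun h => LinearEquiv.ext fun ψ => funext fun p => ?_⟩
  · have hψ := walkShift_zpow_apply (K := K) d n (Pi.single (0, i) 1) (n • d i) i
    rw [zpow_natCast, h, natCast_zsmul, sub_self, Pi.single_eq_same] at hψ
    by_contra hne
    exact zero_ne_one ((Pi.single_eq_of_ne (by simpa using hne) _).symm.trans hψ)
  · rw [← zpow_natCast, walkShift_zpow_apply, natCast_zsmul, h, sub_zero, LinearEquiv.coe_one, id]

lemma orderOf_walkShift [Nontrivial K] {d : ι → G} (hd : Function.Surjective d) :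
    orderOf (walkShift K d) = AddMonoid.exponent G :=
  Nat.dvd_right_iff_eq.1 fun n => by
    rw [orderOf_dvd_iff_pow_eq_one, walkShift_pow_eq_one_iff hd,
      AddMonoid.exponent_dvd_iff_forall_nsmul_eq_zero]

end Shift

section Coin

variable (K V ι : Type*) [Field K] [Fintype ι] [NeZero (Fintype.card ι : K)]

/-- The Grover coin `2P - 1` acting at every vertex of `V` simultaneously, where `P` averages over
the directions `ι`. -/
def groverCoin : (V × ι → K) ≃ₗ[K] (V × ι → K) :=
  LinearEquiv.ofInvolutive
    { toFun := fun ψ p => 2 / Fintype.card ι * ∑ j, ψ (p.1, j) - ψ p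
      map_add' := fun φ ψ => by
        ext p
        simp only [Pi.add_apply, Finset.sum_add_distrib]
        ring
      map_smul' := fun a ψ => by
        ext p
        simp only [Pi.smul_apply, smul_eq_mul, ← Finset.mul_sum, RingHom.id_apply]
        ring }
    fun ψ => by
      have hcard : (Fintype.card ι : K) ≠ 0 := NeZero.ne _
      ext p
      simp only [LinearMap.coe_mk, AddHom.coe_mk, Finset.sum_sub_distrib, Finset.sum_const,
        Finset.card_univ, nsmul_eq_mul]
      field_simp
      ring

variable {K V ι}

lemma groverCoin_apply (ψ : V × ι → K) (v : V) (i : ι) :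
    groverCoin K V ι ψ (v, i) = 2 / Fintype.card ι * ∑ j, ψ (v, j) - ψ (v, i) := rfl

lemma groverCoin_sq : groverCoin K V ι ^ 2 = 1 := by
  ext1 ψ
  rw [sq]
  exact (groverCoin K V ι).left_inv ψ

end Coin

section GroverWalk

-- Both sides equal `∑ l, ∑ x : G, ψ (v - k • x + k • d l, l)`, the left one via `x = d j` and the
-- right one via `x = d i + d l - d j`.
lemma sum_sum_walk_comm {G ι M : Type*} [AddCommGroup G] [Fintype ι] [AddCommMonoid M] {d : ι → G}
    (hd : Function.Bijective d) (k : ℤ) (ψ : G × ι → M) (v : G) (i : ι) :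
    ∑ j, ∑ l, ψ (v - k • d j + k • d l, l) = ∑ j, ∑ l, ψ (v - k • d i + k • d j, l) := by
  let e := Equiv.ofBijective d hd
  rw [Finset.sum_comm, Finset.sum_comm (f := fun j l => ψ (v - k • d i + k • d j, l))]
  refine Finset.sum_congr rfl fun l _ => ?_
  refine Fintype.sum_equiv (e.trans ((Equiv.subLeft (d i + d l)).trans e.symm)) _ _ fun j => ?_
  have he : d (e.symm (d i + d l - d j)) = d i + d l - d j := e.apply_symm_apply _
  change _ = ψ (v - k • d i + k • d (e.symm (d i + d l - d j)), l)
  rw [he]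
  congr 2
  module

variable (K : Type*) {G ι : Type*} [Field K] [AddCommGroup G] [Fintype ι]
  [NeZero (Fintype.card ι : K)]

/-- The time evolution of the moving-shift Grover walk on an additive group `G` whose directions `ι`
move the walker by the steps `d`: apply the Grover coin, then shift. -/
def groverWalk (d : ι → G) : (G × ι → K) ≃ₗ[K] (G × ι → K) :=
  walkShift K d * groverCoin K G ι

variable {K}

lemma groverWalk_apply (d : ι → G) (ψ : G × ι → K) (v : G) (i : ι) :
    groverWalk K d ψ (v, i) =
      2 / Fintype.card ι * ∑ j, ψ (v - d i, j) - ψ (v - d i, i) := rfl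

lemma conj_walkShift_zpow_groverCoin_apply (d : ι → G) (k : ℤ) (ψ : G × ι → K) (v : G) (i : ι) :
    MulAut.conj (walkShift K d ^ k) (groverCoin K G ι) ψ (v, i) =
      2 / Fintype.card ι * ∑ j, ψ (v - k • d i + k • d j, j) - ψ (v, i) := by
  rw [MulAut.conj_apply, ← _root_.zpow_neg]
  simp only [LinearEquiv.mul_apply, walkShift_zpow_apply, groverCoin_apply, neg_smul,
    sub_neg_eq_add, sub_add_cancel]

lemma commute_groverCoin_conj_walkShift_zpow {d : ι → G} (hd : Function.Bijective d) (k : ℤ) :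
    Commute (groverCoin K G ι) (MulAut.conj (walkShift K d ^ k) (groverCoin K G ι)) := by
  ext ψ ⟨v, i⟩
  simp only [LinearEquiv.mul_apply, groverCoin_apply, conj_walkShift_zpow_groverCoin_apply,
    Finset.sum_sub_distrib, ← Finset.mul_sum, sum_sum_walk_comm hd k ψ v i]
  ring

lemma exists_groverWalk_eq_neg [Nontrivial ι] (d : ι → G) :
    ∃ ψ : G × ι → K, ψ ≠ 0 ∧ groverWalk K d ψ = -ψ := by
  classical
  obtain ⟨i, j, hij⟩ := exists_pair_ne ι
  let f : ι → K := Pi.single i 1 - Pi.single j 1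
  have hsum : ∑ l, f l = 0 := by simp [f]
  refine ⟨fun p => f p.2, fun h => ?_, ?_⟩
  · have hi : f i = 0 := congrFun h (0, i)
    simp [f, hij] at hi
  · ext ⟨v, l⟩
    simp [groverWalk_apply, hsum]

lemma even_orderOf_groverWalk [NeZero (2 : K)] [Nontrivial ι] (d : ι → G) :
    Even (orderOf (groverWalk K d)) := by
  obtain ⟨ψ, hψ, hneg⟩ := exists_groverWalk_eq_neg (K := K) d
  have hpow (n : ℕ) : (groverWalk K d ^ n) ψ = (-1 : K) ^ n • ψ := by
    induction n with
    | zero => simp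
    | succ n ih =>
      rw [pow_succ, LinearEquiv.mul_apply, hneg, map_neg, ih, pow_succ, mul_neg_one, neg_smul]
  have hone := hpow (orderOf (groverWalk K d))
  rw [pow_orderOf_eq_one] at hone
  by_contra hodd
  rw [Nat.not_even_iff_odd] at hodd
  rw [hodd.neg_one_pow, LinearEquiv.coe_one, id, neg_one_smul, eq_neg_iff_add_eq_zero, ← two_smul K,
    smul_eq_zero] at hone
  exact hone.elim two_ne_zero hψ

theorem stmt0_general [NeZero (2 : K)] [Nontrivial ι] {d : ι → G} (hd : Function.Bijective d)
    (hG : Odd (AddMonoid.exponent G)) :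
    orderOf (groverWalk K d) = 2 * AddMonoid.exponent G := by
  rw [← orderOf_walkShift (K := K) hd.surjective] at hG ⊢
  exact orderOf_mul_eq_two_mul_orderOf groverCoin_sq (commute_groverCoin_conj_walkShift_zpow hd) hG
    (even_orderOf_groverWalk d)

end GroverWalk

/-- The step `i - m` made by direction `i` of the `(2m+1)`-state walk on the cycle `C_N`. -/
def cycleStep (m N : ℕ) (i : Fin (2 * m + 1)) : ZMod N := (i : ℕ) - m

lemma bijective_cycleStep (m : ℕ) : Function.Bijective (cycleStep m (2 * m + 1)) := by
  let e := (ZMod.finEquiv (2 * m + 1)).toEquiv.trans (Equiv.subRight (m : ZMod (2 * m + 1)))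
  have he : e = cycleStep m (2 * m + 1) :=
    funext fun i => congrArg (· - (m : ZMod (2 * m + 1))) (Fin.cast_val_eq_self i).symm
  exact he ▸ e.bijective

lemma coinM_apply (m : ℕ) (i j : Fin (2 * m + 1)) :
    coinM m i j = 2 / Fintype.card (Fin (2 * m + 1)) - if i = j then 1 else 0 := by
  have hL : (2 * m + 1 : ℂ) ≠ 0 := by exact_mod_cast (2 * m).succ_ne_zero
  rw [coinM, Fintype.card_fin]
  push_cast
  split_ifs
  · field_simp
    ring
  · ring

lemma walkU_coinM_mulVec (m N : ℕ) [NeZero N] (ψ : ZMod N × Fin (2 * m + 1) → ℂ) :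
    walkU m N (coinM m) *ᵥ ψ = groverWalk ℂ (cycleStep m N) ψ := by
  ext ⟨v, i⟩
  have hw (w : ZMod N) (j : Fin (2 * m + 1)) : walkU m N (coinM m) (v, i) (w, j) =
      if v - cycleStep m N i = w then coinM m i j else 0 := by
    simp only [walkU, cycleStep, add_sub_assoc, sub_eq_iff_eq_add]
  simp only [mulVec, dotProduct, Fintype.sum_prod_type, hw, groverWalk_apply]
  simp [coinM_apply, sub_mul, Finset.mul_sum, Finset.sum_ite_irrel]

lemma orderOf_walkU_coinM (m N : ℕ) [NeZero N] :
    orderOf (walkU m N (coinM m)) = orderOf (groverWalk ℂ (cycleStep m N)) := by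
  let toEnd := LinearEquiv.automorphismGroup.toLinearMapMonoidHom
    (R := ℂ) (M := ZMod N × Fin (2 * m + 1) → ℂ)
  have h : toLinAlgEquiv' (walkU m N (coinM m)) = toEnd (groverWalk ℂ (cycleStep m N)) :=
    LinearMap.ext (walkU_coinM_mulVec m N)
  rw [← orderOf_injective toEnd LinearEquiv.toLinearMap_injective, ← h]
  exact (orderOf_injective toLinAlgEquiv'.toAlgHom.toMonoidHom toLinAlgEquiv'.injective _).symm

lemma orderOf_walkU_coinM_self {m : ℕ} (hm : 1 ≤ m) :
    orderOf (walkU m (2 * m + 1) (coinM m)) = 2 * (2 * m + 1) := by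
  have : Nontrivial (Fin (2 * m + 1)) := Fin.nontrivial_iff_two_le.2 (by lia)
  have hodd : Odd (AddMonoid.exponent (ZMod (2 * m + 1))) :=
    (ZMod.exponent _).symm ▸ odd_two_mul_add_one m
  rw [orderOf_walkU_coinM, stmt0_general (bijective_cycleStep m) hodd, ZMod.exponent]

/-- For odd `L = 2m+1 ≥ 3`, the M-type Grover walk on the cycle with `L`
vertices has period `2L`: `U^{2L} = I` and `U^n ≠ I` for `1 ≤ n < 2L`. -/
theorem stmt0 (m : ℕ) (hm : 1 ≤ m) :
    (walkU m (2*m+1) (coinM m)) ^ (2*(2*m+1)) = 1 ∧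
    ∀ n : ℕ, 1 ≤ n → n < 2*(2*m+1) → (walkU m (2*m+1) (coinM m)) ^ n ≠ 1 := by
  obtain ⟨hone, hne⟩ := (orderOf_eq_iff (by lia)).1 (orderOf_walkU_coinM_self hm)
  exact ⟨hone, fun n hpos hlt => hne n hlt hpos⟩
end

section
/- Let L ≥ 3 be a prime number (necessarily odd, L = 2m+1) and let N ≥ 2 with N ≠ L. Then the L-state M-type Grover walk on the cycle with N vertices has infinite period; that is, (U^{M,L}_N)^n ≠ I for every integer n ≥ 1. -/
open Matrix Polynomial

/-!
The discrete Fourier transform along the cycle splits the walk into the blocks `Z^k A`, so a finite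
period makes every block a matrix of finite order, whose trace is an algebraic integer. Up to a root
of unity, the trace of the block at `k = -1` is `(1 - 2m) / L * (1 + ζ + ⋯ + ζ^(L-1))`, and `1 - 2m`
is coprime to `L`, so the average `(1 + ζ + ⋯ + ζ^(L-1)) / L` would be an algebraic integer. All its
conjugates are averages of the same shape, hence of absolute value `< 1`, and by Kronecker's theorem
it would vanish; but `ζ` is a primitive `N`-th root of unity and `ζ ^ L ≠ 1`.
-/

section Integrality

lemma isIntegral_of_mem_spectrum {R K A : Type*} [CommRing R] [Field K] [Ring A] [Algebra R K]
    [Algebra K A] [Algebra R A] [IsScalarTower R K A] {a : A} (ha : IsIntegral R a) {μ : K}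
    (hμ : μ ∈ spectrum K a) : IsIntegral R μ := by
  obtain ⟨p, hp_monic, hp_root⟩ := ha
  have h_aeval : aeval a (p.map (algebraMap R K)) = 0 := by
    rwa [aeval_map_algebraMap]
  have h_mem : (p.map (algebraMap R K)).eval μ ∈ spectrum K (0 : A) :=
    h_aeval ▸ spectrum.subset_polynomial_aeval a _ ⟨μ, hμ, rfl⟩
  have : Nontrivial A := by
    by_contra h
    have := not_nontrivial_iff_subsingleton.mp h
    simp [spectrum.of_subsingleton] at hμ
  rw [spectrum.zero_eq, Set.mem_singleton_iff, eval_map] at h_mem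
  exact ⟨p, hp_monic, h_mem⟩

lemma isIntegral_matrix_trace {R K ι : Type*} [CommRing R] [Field K] [IsAlgClosed K] [Algebra R K]
    [Fintype ι] [DecidableEq ι] {B : Matrix ι ι K} (hB : IsIntegral R B) :
    IsIntegral R B.trace := by
  rw [trace_eq_sum_roots_charpoly]
  refine IsIntegral.multiset_sum fun μ hμ => isIntegral_of_mem_spectrum hB ?_
  exact mem_spectrum_iff_isRoot_charpoly.mpr (isRoot_of_mem_roots hμ)

lemma isIntegral_div_of_isCoprime {R K : Type*} [CommRing R] [Field K] [Algebra R K] {a b : R}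
    (hab : IsCoprime a b) {x : K} (hx : IsIntegral R x)
    (hax : IsIntegral R (algebraMap R K a / algebraMap R K b * x)) :
    IsIntegral R (x / algebraMap R K b) := by
  obtain ⟨u, v, huv⟩ := hab
  obtain hb | hb := eq_or_ne (algebraMap R K b) 0
  · simpa only [hb, div_zero] using isIntegral_zero
  have huv' : algebraMap R K u * algebraMap R K a + algebraMap R K v * algebraMap R K b = 1 := by
    rw [← map_mul, ← map_mul, ← map_add, huv, map_one]
  have h_bezout : x / algebraMap R K b =
      algebraMap R K u * (algebraMap R K a / algebraMap R K b * x) + algebraMap R K v * x := by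
    field_simp
    linear_combination (-x) * huv'
  rw [h_bezout]
  exact (isIntegral_algebraMap.mul hax).add (isIntegral_algebraMap.mul hx)

lemma eq_zero_of_isIntegral_of_norm_lt_one {K : Type*} [Field K] [NumberField K] {x : K}
    (hx : IsIntegral ℤ x) (hlt : ∀ φ : K →+* ℂ, ‖φ x‖ < 1) : x = 0 := by
  by_contra hx0
  obtain ⟨n, hn, hxn⟩ :=
    NumberField.Embeddings.pow_eq_one_of_norm_le_one K ℂ hx0 hx fun φ => (hlt φ).le
  obtain ⟨φ⟩ : Nonempty (K →+* ℂ) := inferInstance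
  have h_norm : ‖φ x‖ ^ n = 1 := by rw [← norm_pow, ← map_pow, hxn, map_one, norm_one]
  exact (pow_lt_one₀ (norm_nonneg _) (hlt φ) hn.ne').ne h_norm

end Integrality

section GeometricSum

lemma norm_geom_sum_lt {A : Type*} [NormedRing A] [NormOneClass A] [NormedSpace ℝ A]
    [StrictConvexSpace ℝ A] {z : A} (hz : ‖z‖ ≤ 1) (hz1 : z ≠ 1) {L : ℕ} (hL : 2 ≤ L) :
    ‖∑ i ∈ Finset.range L, z ^ i‖ < L := by
  obtain ⟨k, rfl⟩ := Nat.exists_eq_add_of_le hL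
  have h_head : ‖1 + z‖ < 2 := by
    have h_mid : ‖(1 / 2 : ℝ) • (1 : A) + (1 / 2 : ℝ) • z‖ < 1 :=
      norm_combo_lt_of_ne norm_one.le hz hz1.symm (by norm_num) (by norm_num) (by norm_num)
    rw [← smul_add, norm_smul, Real.norm_of_nonneg (by norm_num)] at h_mid
    linarith
  have h_tail : ‖∑ i ∈ Finset.range k, z ^ (2 + i)‖ ≤ k := by
    have h_term (i : ℕ) : ‖z ^ (2 + i)‖ ≤ 1 :=
      (norm_pow_le z _).trans (pow_le_one₀ (norm_nonneg z) hz)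
    simpa using norm_sum_le_of_le (Finset.range k) fun i _ => h_term i
  calc ‖∑ i ∈ Finset.range (2 + k), z ^ i‖
      = ‖(1 + z) + ∑ i ∈ Finset.range k, z ^ (2 + i)‖ := by
        simp only [Finset.sum_range_add, Finset.sum_range_succ, Finset.sum_range_zero, zero_add,
          pow_zero, pow_one]
    _ ≤ ‖1 + z‖ + ‖∑ i ∈ Finset.range k, z ^ (2 + i)‖ := norm_add_le _ _
    _ < (2 + k : ℕ) := by push_cast; linarith

lemma geom_sum_ne_zero_of_isPrimitiveRoot {R : Type*} [CommRing R] {ζ : R} {N L : ℕ}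
    (hζ : IsPrimitiveRoot ζ N) (hNL : ¬ N ∣ L) : ∑ i ∈ Finset.range L, ζ ^ i ≠ 0 := by
  intro h_sum
  have h_pow := geom_sum_mul ζ L
  rw [h_sum, zero_mul, eq_comm, sub_eq_zero] at h_pow
  exact hNL (hζ.dvd_of_pow_eq_one L h_pow)

lemma not_isIntegral_geom_sum_div_of_numberField {K : Type*} [Field K] [NumberField K] {ζ : K}
    {N L : ℕ} [NeZero N] (hζ : IsPrimitiveRoot ζ N) (hL : 2 ≤ L) (hNL : ¬ N ∣ L) :
    ¬ IsIntegral ℤ ((∑ i ∈ Finset.range L, ζ ^ i) / (L : K)) := by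
  intro h_int
  have hL0 : (L : K) ≠ 0 := Nat.cast_ne_zero.mpr (by omega)
  refine div_ne_zero (geom_sum_ne_zero_of_isPrimitiveRoot hζ hNL) hL0
    (eq_zero_of_isIntegral_of_norm_lt_one h_int fun φ => ?_)
  have hφζ : IsPrimitiveRoot (φ ζ) N := hζ.map_of_injective φ.injective
  have hφζ_norm : ‖φ ζ‖ = 1 := hφζ.norm'_eq_one (NeZero.ne N)
  have hφζ_ne : φ ζ ≠ 1 := fun h => hNL (by
    rw [h] at hφζ
    exact (hφζ.dvd_of_pow_eq_one 1 (one_pow 1)).trans (one_dvd L))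
  rw [map_div₀, map_sum, map_natCast, norm_div, Complex.norm_natCast, div_lt_one (by positivity)]
  simpa only [map_pow] using norm_geom_sum_lt hφζ_norm.le hφζ_ne hL

lemma not_isIntegral_geom_sum_div {F : Type*} [Field F] [CharZero F] {ζ : F} {N L : ℕ} [NeZero N]
    (hζ : IsPrimitiveRoot ζ N) (hL : 2 ≤ L) (hNL : ¬ N ∣ L) :
    ¬ IsIntegral ℤ ((∑ i ∈ Finset.range L, ζ ^ i) / (L : F)) := by
  let K := IntermediateField.adjoin ℚ {ζ}
  have hζ_int : IsIntegral ℤ ζ := hζ.isIntegral (NeZero.pos N)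
  have : FiniteDimensional ℚ K := IntermediateField.adjoin.finiteDimensional hζ_int.tower_top
  have : NumberField K := ⟨⟩
  let ζ' : K := IntermediateField.AdjoinSimple.gen ℚ ζ
  have hζ' : IsPrimitiveRoot ζ' N :=
    IsPrimitiveRoot.of_map_of_injective (f := algebraMap K F) hζ (algebraMap K F).injective
  intro h_int
  refine not_isIntegral_geom_sum_div_of_numberField hζ' hL hNL
    ((isIntegral_algebraMap_iff (algebraMap K F).injective).mp ?_)
  simpa [ζ'] using h_int

end GeometricSum

lemma matrix_pow_mul_eq_mul_pow {R ι κ : Type*} [Semiring R] [Fintype ι] [DecidableEq ι]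
    [Fintype κ] [DecidableEq κ] {U : Matrix ι ι R} {E : Matrix ι κ R} {B : Matrix κ κ R}
    (h : U * E = E * B) (n : ℕ) : U ^ n * E = E * B ^ n := by
  induction n with
  | zero => simp
  | succ n ih =>
    rw [pow_succ, Matrix.mul_assoc, h, ← Matrix.mul_assoc, ih, Matrix.mul_assoc, ← pow_succ]

section Fourier

variable {m N : ℕ} [NeZero N]

lemma isPrimitiveRoot_zetaN : IsPrimitiveRoot (zetaN N) N :=
  Complex.isPrimitiveRoot_exp N (NeZero.ne N)

lemma isIntegral_zetaN_zpow (k : ℤ) : IsIntegral ℤ (zetaN N ^ k) := by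
  refine IsIntegral.of_pow (NeZero.pos N) ?_
  rw [← zpow_natCast, zpow_comm, zpow_natCast, isPrimitiveRoot_zetaN.pow_eq_one, _root_.one_zpow]
  exact isIntegral_one

lemma stdAddChar_intCast_eq_zetaN_zpow (k : ℤ) :
    ZMod.stdAddChar (k : ZMod N) = zetaN N ^ k := by
  rw [ZMod.stdAddChar_coe, zetaN, ← Complex.exp_int_mul]
  congr 1
  ring

/-- The `k`-th Fourier mode: its columns span the space of states `ψ(v, i) = ζ_N^{kv} φ(i)`, with
`ζ_N^{kv}` encoded as the value of the standard additive character of `ℤ/N` at `k * v`. -/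
noncomputable def fourierMode (m N : ℕ) [NeZero N] (k : ℤ) :
    Matrix (ZMod N × Fin (2 * m + 1)) (Fin (2 * m + 1)) ℂ :=
  fun p j => if p.2 = j then ZMod.stdAddChar ((k : ZMod N) * p.1) else 0

lemma fourierMode_mul_apply {κ : Type*} (k : ℤ) (X : Matrix (Fin (2 * m + 1)) κ ℂ)
    (v : ZMod N) (i : Fin (2 * m + 1)) (j : κ) :
    (fourierMode m N k * X) (v, i) j = ZMod.stdAddChar ((k : ZMod N) * v) * X i j := by
  simp [Matrix.mul_apply, fourierMode]

lemma fourierMode_mul_injective {κ : Type*} (k : ℤ) :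
    Function.Injective fun X : Matrix (Fin (2 * m + 1)) κ ℂ => fourierMode m N k * X := by
  intro X Y hXY
  ext i j
  simpa [fourierMode_mul_apply] using congrFun₂ hXY (0, i) j

lemma walkU_mul_apply {κ : Type*} (A : Matrix (Fin (2 * m + 1)) (Fin (2 * m + 1)) ℂ)
    (X : Matrix (ZMod N × Fin (2 * m + 1)) κ ℂ) (v : ZMod N) (i : Fin (2 * m + 1)) (j : κ) :
    (walkU m N A * X) (v, i) j = ∑ l, A i l * X (v - (i : ℕ) + m, l) j := by
  have h_iff (w : ZMod N) : v = w + (i : ℕ) - m ↔ w = v - (i : ℕ) + m := by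
    constructor <;> rintro rfl <;> ring
  simp [Matrix.mul_apply, walkU, Fintype.sum_prod_type_right, h_iff]

lemma walkU_mul_fourierMode (A : Matrix (Fin (2 * m + 1)) (Fin (2 * m + 1)) ℂ) (k : ℤ) :
    walkU m N A * fourierMode m N k = fourierMode m N k * (ZmatPow N m k * A) := by
  ext ⟨v, i⟩ j
  have h_char : ZMod.stdAddChar ((k : ZMod N) * (v - ((i : ℕ) : ZMod N) + (m : ZMod N))) =
      ZMod.stdAddChar ((k : ZMod N) * v) * zetaN N ^ (((m : ℤ) - (i : ℕ)) * k) := by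
    rw [← stdAddChar_intCast_eq_zetaN_zpow, ← AddChar.map_add_eq_mul]
    congr 1
    push_cast
    ring
  rw [walkU_mul_apply, fourierMode_mul_apply, ZmatPow, diagonal_mul, ← mul_assoc, ← h_char]
  simp [fourierMode, mul_comm]

lemma ZmatPow_mul_pow_eq_one {A : Matrix (Fin (2 * m + 1)) (Fin (2 * m + 1)) ℂ} {n : ℕ}
    (h : walkU m N A ^ n = 1) (k : ℤ) : (ZmatPow N m k * A) ^ n = 1 := by
  refine fourierMode_mul_injective (N := N) k ?_
  simp only [← matrix_pow_mul_eq_mul_pow (walkU_mul_fourierMode A k), h, Matrix.one_mul,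
    Matrix.mul_one]

lemma trace_ZmatPow_mul_coinM (k : ℤ) :
    (ZmatPow N m k * coinM m).trace = (1 - 2 * (m : ℂ)) / (2 * (m : ℂ) + 1) *
      (zetaN N ^ ((m : ℤ) * k) * ∑ i ∈ Finset.range (2 * m + 1), (zetaN N ^ (-k)) ^ i) := by
  have hζ : zetaN N ≠ 0 := isPrimitiveRoot_zetaN.ne_zero (NeZero.ne N)
  rw [Matrix.trace, ← Fin.sum_univ_eq_sum_range, Finset.mul_sum, Finset.mul_sum]
  refine Finset.sum_congr rfl fun i _ => ?_
  rw [diag_apply, ZmatPow, diagonal_mul, coinM, if_pos rfl, mul_comm, ← zpow_natCast,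
    ← _root_.zpow_mul, ← zpow_add₀ hζ]
  congr 2
  ring

lemma isIntegral_geom_sum_div_of_walkU_pow_eq_one {n : ℕ} (hn : 0 < n)
    (hU : walkU m N (coinM m) ^ n = 1) :
    IsIntegral ℤ ((∑ i ∈ Finset.range (2 * m + 1), zetaN N ^ i) / (2 * m + 1 : ℕ)) := by
  set S := ∑ i ∈ Finset.range (2 * m + 1), zetaN N ^ i
  have h_block : IsIntegral ℤ (ZmatPow N m (-1) * coinM m) :=
    .of_pow hn (ZmatPow_mul_pow_eq_one hU (-1) ▸ isIntegral_one)
  have h_trace : IsIntegral ℤ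
      ((1 - 2 * (m : ℂ)) / (2 * (m : ℂ) + 1) * (zetaN N ^ (-m : ℤ) * S)) := by
    simpa only [trace_ZmatPow_mul_coinM, mul_neg_one, neg_neg, zpow_one]
      using isIntegral_matrix_trace h_block
  have hS : IsIntegral ℤ (zetaN N ^ (-m : ℤ) * S) :=
    (isIntegral_zetaN_zpow _).mul
      (.sum _ fun i _ => by simpa using isIntegral_zetaN_zpow (N := N) i)
  have h_coprime : IsCoprime (1 - 2 * m : ℤ) (2 * m + 1) := ⟨-m, 1 - m, by ring⟩
  have h_div : IsIntegral ℤ (zetaN N ^ (-m : ℤ) * S / (2 * (m : ℂ) + 1)) := by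
    simpa using isIntegral_div_of_isCoprime h_coprime hS (by simpa using h_trace)
  have h_unit : zetaN N ^ (m : ℤ) * (zetaN N ^ (-m : ℤ) * S / (2 * (m : ℂ) + 1)) =
      S / (2 * m + 1 : ℕ) := by
    rw [mul_div_assoc, ← mul_assoc, ← zpow_add₀ (isPrimitiveRoot_zetaN.ne_zero (NeZero.ne N))]
    simp
  exact h_unit ▸ (isIntegral_zetaN_zpow _).mul h_div

end Fourier

theorem stmt1_general (m N : ℕ) [NeZero N] (hm : 1 ≤ m) (hNL : ¬ N ∣ 2 * m + 1) :
    ∀ n : ℕ, 1 ≤ n → (walkU m N (coinM m)) ^ n ≠ 1 := fun _ hn hU =>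
  not_isIntegral_geom_sum_div isPrimitiveRoot_zetaN (by omega) hNL
    (isIntegral_geom_sum_div_of_walkU_pow_eq_one hn hU)

/-- For prime `L = 2m+1 ≥ 3` and `N ≥ 2` with `N ≠ L`, the M-type Grover walk
on the cycle with `N` vertices has infinite period: `U^n ≠ I` for all `n ≥ 1`. -/
theorem stmt1 (m N : ℕ) [NeZero N] (hm : 1 ≤ m) (hp : Nat.Prime (2*m+1))
    (hN : 2 ≤ N) (hNL : N ≠ 2*m+1) :
    ∀ n : ℕ, 1 ≤ n → (walkU m N (coinM m)) ^ n ≠ 1 :=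
  stmt1_general m N hm fun h => ((Nat.dvd_prime hp).mp h).elim (by omega) hNL
end

section
/- Let L = 2m+1 ≥ 3 be an odd integer and let U = U^{F,L}_L be the time-evolution operator of the L-state F-type Grover walk on the cycle with L vertices. Then the period of the walk equals 4; that is, U^4 = I and U^n ≠ I for n = 1, 2, 3. -/
open Matrix Polynomial

/-!
Let `G = (2/L) J - 1` be the Grover matrix on `ℤ/L`. Relabel the basis state `(v, i)` by the arc
`(v, v - (i - m))`, which records the current and the previous position of the walker. Since the
number of vertices equals the number of coin states, this is a bijection onto all pairs of vertices,
and the walk becomes the flip-flop Grover walk on the complete graph with loops, whose evolution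
operator is `U = (G ⊗ 1) S` with `S` the swap. As `S (G ⊗ 1) S = 1 ⊗ G`, we get `U² = G ⊗ G`,
which has off-diagonal entries `(2/L)² ≠ 0`, and `U⁴ = G² ⊗ G² = 1` because `G` is an involution.
-/

open scoped Kronecker

section FlipFlopWalk

variable {V R : Type*} [DecidableEq V] [CommSemiring R]

/-- The evolution operator of the flip-flop walk on the complete graph on `V` with loops, with the
same coin `A` at every vertex. The basis state `(v, w)` is a walker now at `v` that came from `w`,
so the second Kronecker factor of `A ⊗ₖ 1`, followed by a swap of the columns, makes the previous
position of the new state equal to the current position of the old one. -/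
def flipFlopWalk (A : Matrix V V R) : Matrix (V × V) (V × V) R :=
  (A ⊗ₖ (1 : Matrix V V R)).submatrix id Prod.swap

lemma flipFlopWalk_apply (A : Matrix V V R) (a b : V × V) :
    flipFlopWalk A a b = if a.2 = b.1 then A a.1 b.2 else 0 := by
  simp [flipFlopWalk, Matrix.one_apply]

lemma flipFlopWalk_sq [Fintype V] (A : Matrix V V R) : flipFlopWalk A ^ 2 = A ⊗ₖ A := by
  have swap_conj : flipFlopWalk A = ((1 : Matrix V V R) ⊗ₖ A).submatrix Prod.swap id := by
    ext a b
    simp [flipFlopWalk, one_apply, eq_comm]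
  calc flipFlopWalk A ^ 2
      = (A ⊗ₖ (1 : Matrix V V R)).submatrix id (Equiv.prodComm V V) *
          ((1 : Matrix V V R) ⊗ₖ A).submatrix (Equiv.prodComm V V) id := by
        rw [sq]; nth_rewrite 2 [swap_conj]; rfl
    _ = A ⊗ₖ A := by
        rw [submatrix_mul_equiv, ← mul_kronecker_mul, mul_one, one_mul, submatrix_id_id]

end FlipFlopWalk

section GroverMatrix

variable (V K : Type*) [Fintype V] [DecidableEq V] [Field K]

/-- The Grover diffusion matrix `(2 / |V|) J - 1`, where `J` is the all-ones matrix. -/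
def groverMatrix : Matrix V V K :=
  (2 / (Fintype.card V : K)) • of (fun _ _ => 1) - 1

variable {V K}

lemma groverMatrix_apply (x y : V) :
    groverMatrix V K x y = 2 / (Fintype.card V : K) - if x = y then 1 else 0 := by
  simp [groverMatrix, one_apply]

lemma groverMatrix_sq (hV : (Fintype.card V : K) ≠ 0) : groverMatrix V K ^ 2 = 1 := by
  set J : Matrix V V K := of fun _ _ => 1
  set c : K := 2 / Fintype.card V
  have J_mul_J : J * J = (Fintype.card V : K) • J := by
    ext
    simp [J, mul_apply]
  have c_mul_card : c * Fintype.card V = 2 := div_mul_cancel₀ 2 hV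
  calc (c • J - 1) ^ 2 = (c * c) • (J * J) - (2 * c) • J + 1 := by
        rw [sq, sub_mul, mul_sub, smul_mul_smul_comm, mul_one, one_mul]
        module
    _ = (c * (c * Fintype.card V - 2)) • J + 1 := by
        rw [J_mul_J]
        module
    _ = 1 := by rw [c_mul_card, sub_self, mul_zero, zero_smul, zero_add]

lemma groverMatrix_kronecker_self_ne_one [Nontrivial V] (h2 : (2 : K) ≠ 0)
    (hV : (Fintype.card V : K) ≠ 0) : groverMatrix V K ⊗ₖ groverMatrix V K ≠ 1 := by
  obtain ⟨x, y, hxy⟩ := exists_pair_ne V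
  intro h
  have entry := congrFun₂ h (x, x) (y, y)
  simp [groverMatrix_apply, hxy, h2, hV] at entry

theorem orderOf_flipFlopWalk_groverMatrix [Nontrivial V] (h2 : (2 : K) ≠ 0)
    (hV : (Fintype.card V : K) ≠ 0) : orderOf (flipFlopWalk (groverMatrix V K)) = 4 := by
  refine orderOf_eq_prime_pow (p := 2) (n := 1) ?_ ?_
  · rw [pow_one, flipFlopWalk_sq]
    exact groverMatrix_kronecker_self_ne_one h2 hV
  · rw [pow_succ, pow_one, pow_mul, flipFlopWalk_sq, sq, ← mul_kronecker_mul, ← sq,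
      groverMatrix_sq hV, one_kronecker_one]

end GroverMatrix

section GroverWalkOnCycle

variable {m : ℕ}

/-- The displacement `i - m` of a walker in the coin state `i`, modulo `2m+1`. -/
def displacement (m : ℕ) : Fin (2 * m + 1) ≃ ZMod (2 * m + 1) :=
  (ZMod.finEquiv (2 * m + 1)).toEquiv.trans (Equiv.subRight (m : ZMod (2 * m + 1)))

lemma displacement_apply (i : Fin (2 * m + 1)) :
    displacement m i = ((i : ℕ) : ZMod (2 * m + 1)) - (m : ZMod (2 * m + 1)) :=
  congrArg (· - (m : ZMod (2 * m + 1))) (Fin.cast_val_eq_self i).symm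

lemma displacement_rev (i : Fin (2 * m + 1)) : displacement m i.rev = -displacement m i := by
  have sum_eq : (i.rev : ℕ) + i = 2 * m := by rw [Fin.val_rev]; omega
  have cast_sum_eq := congrArg (Nat.cast (R := ZMod (2 * m + 1))) sum_eq
  push_cast at cast_sum_eq
  rw [displacement_apply, displacement_apply]
  linear_combination cast_sum_eq

lemma coinF_apply_eq_groverMatrix (i j : Fin (2 * m + 1)) :
    coinF m i j = groverMatrix (ZMod (2 * m + 1)) ℂ (displacement m i) (-displacement m j) := by
  have antidiagonal : (i : ℕ) + j = 2 * m ↔ displacement m i = -displacement m j := by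
    rw [← displacement_rev, (displacement m).injective.eq_iff, Fin.ext_iff, Fin.val_rev]
    omega
  have card_ne_zero : (2 * (m : ℂ) + 1) ≠ 0 := by exact_mod_cast (2 * m).succ_ne_zero
  simp only [coinF, groverMatrix_apply, antidiagonal, ZMod.card]
  push_cast
  split_ifs
  · field_simp
    ring
  · rw [sub_zero]

/-- The relabelling of a basis state `(v, i)` of the walk on the cycle `C_{2m+1}` as the pair of the
current position `v` and the previous position `v - (i - m)`. -/
def arcEquiv (m : ℕ) : ZMod (2 * m + 1) × Fin (2 * m + 1) ≃ ZMod (2 * m + 1) × ZMod (2 * m + 1) :=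
  Equiv.prodShear (Equiv.refl _) fun v => (displacement m).trans (Equiv.subLeft v)

lemma arcEquiv_apply (v : ZMod (2 * m + 1)) (i : Fin (2 * m + 1)) :
    arcEquiv m (v, i) = (v, v - displacement m i) := rfl

lemma walkU_coinF_eq_reindex_flipFlopWalk (m : ℕ) :
    walkU m (2 * m + 1) (coinF m) =
      reindexAlgEquiv ℂ ℂ (arcEquiv m).symm (flipFlopWalk (groverMatrix (ZMod (2 * m + 1)) ℂ)) := by
  ext ⟨v, i⟩ ⟨w, j⟩
  have step : v = w + ((i : ℕ) : ZMod (2 * m + 1)) - m ↔ v - displacement m i = w := by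
    rw [displacement_apply, sub_eq_iff_eq_add, add_sub_assoc]
  have coin_eq (h : v - displacement m i = w) :
      coinF m i j = groverMatrix (ZMod (2 * m + 1)) ℂ v (w - displacement m j) := by
    have reflect : displacement m i = -displacement m j ↔ v = w - displacement m j := by
      rw [← h, sub_sub, eq_sub_iff_add_eq, eq_neg_iff_add_eq_zero, ← add_eq_left (a := v)]
    simp only [coinF_apply_eq_groverMatrix, groverMatrix_apply, reflect]
  calc walkU m (2 * m + 1) (coinF m) (v, i) (w, j)
      = if v - displacement m i = w then coinF m i j else 0 := if_congr step rfl rfl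
    _ = if v - displacement m i = w
          then groverMatrix (ZMod (2 * m + 1)) ℂ v (w - displacement m j) else 0 :=
        ite_congr rfl coin_eq fun _ => rfl
    _ = flipFlopWalk (groverMatrix _ ℂ) (arcEquiv m (v, i)) (arcEquiv m (w, j)) := by
        rw [flipFlopWalk_apply, arcEquiv_apply, arcEquiv_apply]

theorem orderOf_walkU_coinF (hm : 1 ≤ m) : orderOf (walkU m (2 * m + 1) (coinF m)) = 4 := by
  have : Fact (1 < 2 * m + 1) := ⟨by omega⟩
  have card_ne_zero : (Fintype.card (ZMod (2 * m + 1)) : ℂ) ≠ 0 :=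
    Nat.cast_ne_zero.mpr Fintype.card_ne_zero
  rw [walkU_coinF_eq_reindex_flipFlopWalk]
  exact ((reindexAlgEquiv ℂ ℂ (arcEquiv m).symm).toMulEquiv.orderOf_eq _).trans
    (orderOf_flipFlopWalk_groverMatrix two_ne_zero card_ne_zero)

end GroverWalkOnCycle

/-- For odd `L = 2m+1 ≥ 3`, the F-type Grover walk on the cycle with `L`
vertices has period `4`: `U^4 = I` and `U^n ≠ I` for `n = 1, 2, 3`. -/
theorem stmt3 (m : ℕ) (hm : 1 ≤ m) :
    (walkU m (2*m+1) (coinF m)) ^ 4 = 1 ∧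
    ∀ n : ℕ, 1 ≤ n → n < 4 → (walkU m (2*m+1) (coinF m)) ^ n ≠ 1 := by
  have period := orderOf_walkU_coinF hm
  refine ⟨period ▸ pow_orderOf_eq_one _, fun n hn_pos hn_lt => ?_⟩
  exact pow_ne_one_of_lt_orderOf (Nat.one_le_iff_ne_zero.mp hn_pos) (period ▸ hn_lt)
end

section
/- Let L = 2m+1 ≥ 3 be an odd prime. Then the polynomial f^{M,L}_{L²}(x) does not have all integer coefficients; that is, some coefficient of f^{M,L}_{L²} (in particular its coefficient of x³) is not an integer. -/
open Matrix Polynomial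

/-!
Put `ζ = ζ_N` and `L = 2m+1`. Since `Z^k A` is a diagonal matrix plus a rank-one matrix, `-f_{N,k}`
has `r`-th coefficient `(1 - 2r/L) e_r`, where `e_r` is the `r`-th coefficient of
`∏_{|j| ≤ m} (x + ζ^{jk})`; in particular it has constant term `1`. The third coefficient of the
product over `k` is therefore an integral polynomial, up to the factor `6`, in the sums over `k` of
the first three logarithmic-derivative coefficients. Each `e_r` is a Laurent polynomial in `ζ^k`
with integer coefficients, so by orthogonality of roots of unity every integral polynomial in the
`e_r` sums over `k` to a multiple of `N`. When `N = L² M`, this clears all denominators except that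
of the cubic term `((L-2)/L)³ ∑_k e_1³ = (L-2)³ T M / L`, where `T` is the number of triples in
`[-m, m]³` with sum zero. As `4T = 3L² + 1`, the number `2 (L-2)³ T` is prime to `L`, and the
denominator survives unless `L ∣ M`.
-/

open Finset
open scoped LaurentPolynomial
open LaurentPolynomial (T)

section DetRankOne

variable {ι : Type*} [Fintype ι] [DecidableEq ι]

lemma det_diagonal_add_vecMulVec_of_isUnit {R : Type*} [CommRing R] (d u v : ι → R)
    (hd : ∀ i, IsUnit (d i)) :
    (diagonal d + vecMulVec u v).det =
      ∏ i, d i + ∑ i, u i * v i * ∏ j ∈ univ.erase i, d j := by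
  choose e he using hd
  obtain rfl : (fun i => (e i : R)) = d := funext he
  have hfactor : diagonal (fun i => (e i : R)) + vecMulVec u v =
      diagonal (fun i => (e i : R)) *
        (1 + replicateCol Unit (fun i => ↑(e i)⁻¹ * u i) * replicateRow Unit v) := by
    rw [← vecMulVec_eq, Matrix.mul_add, Matrix.mul_one]
    congr 1
    ext i j
    rw [diagonal_mul, vecMulVec_apply, vecMulVec_apply, ← mul_assoc, Units.mul_inv_cancel_left]
  rw [hfactor, det_mul, det_diagonal, det_one_add_replicateCol_mul_replicateRow, mul_add, mul_one,
    dotProduct, mul_sum]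
  congr 1
  refine sum_congr rfl fun i _ => ?_
  rw [← mul_prod_erase univ (fun j => (e j : R)) (mem_univ i)]
  linear_combination u i * v i * (∏ j ∈ univ.erase i, (e j : R)) * (e i).mul_inv

lemma map_det_diagonal_add_vecMulVec {R S : Type*} [CommRing R] [CommRing S] (φ : R →+* S)
    (d u v : ι → R) :
    φ (diagonal d + vecMulVec u v).det =
      (diagonal (fun i => φ (d i)) + vecMulVec (fun i => φ (u i)) fun i => φ (v i)).det := by
  rw [RingHom.map_det]
  congr 1
  ext i j
  by_cases h : i = j <;> simp [h, vecMulVec_apply]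

-- Replacing `d i` by the non-zero-divisor `X + C (d i)` and localizing makes the entries units.
lemma det_diagonal_add_vecMulVec {R : Type*} [CommRing R] (d u v : ι → R) :
    (diagonal d + vecMulVec u v).det =
      ∏ i, d i + ∑ i, u i * v i * ∏ j ∈ univ.erase i, d j := by
  let φ := algebraMap R[X] (Localization (nonZeroDivisors R[X]))
  have hφ : Function.Injective φ := IsLocalization.injective _ le_rfl
  have hunit (i : ι) : IsUnit (φ (X + C (d i))) :=
    IsLocalization.map_units _
      (⟨_, (monic_X_add_C (d i)).mem_nonZeroDivisors⟩ : nonZeroDivisors R[X])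
  have hpoly :
      (diagonal (fun i => X + C (d i)) + vecMulVec (fun i => C (u i)) fun i => C (v i)).det =
      ∏ i, (X + C (d i)) + ∑ i, C (u i) * C (v i) * ∏ j ∈ univ.erase i, (X + C (d j)) := by
    apply hφ
    rw [map_det_diagonal_add_vecMulVec, det_diagonal_add_vecMulVec_of_isUnit _ _ _ hunit]
    simp only [map_add, map_sum, map_mul, map_prod]
  have heval := congrArg (evalRingHom (0 : R)) hpoly
  rw [map_det_diagonal_add_vecMulVec] at heval
  simpa [eval_prod, eval_finsetSum] using heval

lemma charpoly_diagonal_mul_const_sub_one {R : Type*} [CommRing R]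
    (w : ι → R) (c : R) :
    (diagonal w * (of (fun _ _ => c) - 1)).charpoly =
      C (1 - c * Fintype.card ι) * ∏ i, (X + C (w i)) +
        C c * (X * derivative (∏ i, (X + C (w i)))) := by
  have hmatrix : charmatrix (diagonal w * (of (fun _ _ => c) - 1)) =
      diagonal (fun i => X + C (w i)) + vecMulVec (fun i => -C (c * w i)) 1 := by
    ext1 i j
    by_cases h : i = j
    · subst h
      simp only [charmatrix_apply_eq, diagonal_mul, Matrix.sub_apply, of_apply, one_apply_eq,
        map_mul, map_sub, map_one, vecMulVec_one, Matrix.add_apply, diagonal_apply_eq,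
        replicateCol_apply]
      ring
    · simp [h, mul_comm]
  have hterm (i : ι) : -C (c * w i) * (1 : ι → R[X]) i * ∏ j ∈ univ.erase i, (X + C (w j)) =
      C c * (X * ∏ j ∈ univ.erase i, (X + C (w j))) - C c * ∏ j, (X + C (w j)) := by
    rw [← mul_prod_erase univ (fun j => X + C (w j)) (mem_univ i), C_mul, Pi.one_apply]
    ring
  have hderiv : derivative (∏ i, (X + C (w i))) = ∑ i, ∏ j ∈ univ.erase i, (X + C (w j)) := by
    simp [derivative_prod_finset]
  rw [Matrix.charpoly, hmatrix, det_diagonal_add_vecMulVec,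
    sum_congr rfl fun i _ => hterm i, sum_sub_distrib, ← mul_sum, ← mul_sum, ← hderiv]
  simp only [sum_const, card_univ, nsmul_eq_mul, map_sub, map_one, map_mul, map_natCast]
  ring

lemma coeff_charpoly_diagonal_mul_const_sub_one {R : Type*} [CommRing R]
    (w : ι → R) (c : R) (r : ℕ) :
    (diagonal w * (of (fun _ _ => c) - 1)).charpoly.coeff r =
      (1 + c * (r - Fintype.card ι)) * (∏ i, (X + C (w i))).coeff r := by
  rw [charpoly_diagonal_mul_const_sub_one]
  cases r with
  | zero => simp [sub_eq_add_neg]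
  | succ r =>
    simp only [coeff_add, coeff_C_mul, coeff_X_mul, coeff_derivative]
    push_cast
    ring

end DetRankOne

section LowCoefficients

variable {ι R : Type*} [CommRing R]

lemma coeff_one_prod_X_add_C [DecidableEq ι] (s : Finset ι) (w : ι → R) :
    (∏ i ∈ s, (X + C (w i))).coeff 1 = ∑ i ∈ s, ∏ j ∈ s.erase i, w j := by
  have h : (∏ i ∈ s, (X + C (w i))).coeff 1 = (derivative (∏ i ∈ s, (X + C (w i)))).coeff 0 := by
    simp [coeff_derivative]
  rw [h, derivative_prod_finset]
  simp [coeff_zero_eq_eval_zero, eval_finsetSum, eval_prod]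

lemma map_prod_eq_sum_of_coeff_zero_eq_one {M : Type*} [AddCommMonoid M] (Φ : R[X] → M)
    (hone : Φ 1 = 0)
    (hmul : ∀ p q : R[X], p.coeff 0 = 1 → q.coeff 0 = 1 → Φ (p * q) = Φ p + Φ q)
    (s : Finset ι) (g : ι → R[X]) (hg : ∀ i ∈ s, (g i).coeff 0 = 1) :
    Φ (∏ i ∈ s, g i) = ∑ i ∈ s, Φ (g i) := by
  classical
  induction s using Finset.induction_on with
  | empty => simpa using hone
  | insert a s ha ih =>
    have hs : ∀ i ∈ s, (g i).coeff 0 = 1 := fun i hi => hg i (mem_insert_of_mem hi)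
    rw [prod_insert ha, sum_insert ha, hmul _ _ (hg a (mem_insert_self a s))
      (by rw [coeff_zero_prod, prod_eq_one hs]), ih hs]

-- The summands are the first three coefficients of the logarithmic derivative of `g i`.
lemma six_mul_coeff_three_prod (s : Finset ι) (g : ι → R[X]) (hg : ∀ i ∈ s, (g i).coeff 0 = 1) :
    6 * (∏ i ∈ s, g i).coeff 3 =
      (∑ i ∈ s, (g i).coeff 1) ^ 3 +
      3 * (∑ i ∈ s, (g i).coeff 1) * (∑ i ∈ s, (2 * (g i).coeff 2 - (g i).coeff 1 ^ 2)) +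
      2 * ∑ i ∈ s, (3 * (g i).coeff 3 - 3 * (g i).coeff 1 * (g i).coeff 2 + (g i).coeff 1 ^ 3) := by
  have hcoeff_two (p q : R[X]) : (p * q).coeff 2 =
      p.coeff 0 * q.coeff 2 + p.coeff 1 * q.coeff 1 + p.coeff 2 * q.coeff 0 := by
    simp [coeff_mul, Finset.Nat.antidiagonal_succ, add_assoc]
  have hcoeff_three (p q : R[X]) : (p * q).coeff 3 = p.coeff 0 * q.coeff 3 +
      p.coeff 1 * q.coeff 2 + p.coeff 2 * q.coeff 1 + p.coeff 3 * q.coeff 0 := by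
    simp [coeff_mul, Finset.Nat.antidiagonal_succ, add_assoc]
  have h₁ := map_prod_eq_sum_of_coeff_zero_eq_one (fun p : R[X] => p.coeff 1)
    (by simp [coeff_one])
    (fun p q hp hq => by simp [mul_coeff_one, hp, hq, add_comm]) s g hg
  have h₂ := map_prod_eq_sum_of_coeff_zero_eq_one
    (fun p : R[X] => 2 * p.coeff 2 - p.coeff 1 ^ 2)
    (by simp [coeff_one])
    (fun p q hp hq => by
      simp only [mul_coeff_one, hcoeff_two, hp, hq]
      ring) s g hg
  have h₃ := map_prod_eq_sum_of_coeff_zero_eq_one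
    (fun p : R[X] => 3 * p.coeff 3 - 3 * p.coeff 1 * p.coeff 2 + p.coeff 1 ^ 3)
    (by simp [coeff_one])
    (fun p q hp hq => by
      simp only [mul_coeff_one, hcoeff_two, hcoeff_three, hp, hq]
      ring) s g hg
  rw [← h₁, ← h₂, ← h₃]
  ring

end LowCoefficients

section RootOfUnitySums

variable {K : Type*} [CommRing K] [IsDomain K] {ζ : Kˣ} {N : ℕ}

lemma sum_zpow_primitiveRoot_pow (hζ : IsPrimitiveRoot ζ N) (j : ℤ) :
    ∑ k ∈ range N, (((ζ ^ k) ^ j : Kˣ) : K) = if (N : ℤ) ∣ j then (N : K) else 0 := by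
  have hswap (k : ℕ) : (((ζ ^ k) ^ j : Kˣ) : K) = ((ζ ^ j : Kˣ) : K) ^ k := by
    rw [← Units.val_pow_eq_pow_val, ← zpow_natCast, ← zpow_natCast, zpow_comm]
  simp only [hswap]
  split_ifs with h
  · simp [(hζ.zpow_eq_one_iff_dvd j).2 h]
  · have hne : ((ζ ^ j : Kˣ) : K) - 1 ≠ 0 := by
      rw [sub_ne_zero, Ne, Units.val_eq_one, hζ.zpow_eq_one_iff_dvd]
      exact h
    refine (mul_eq_zero.1 ?_).resolve_left hne
    rw [mul_geom_sum, ← hswap, hζ.pow_eq_one, _root_.one_zpow, Units.val_one, sub_self]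

lemma exists_int_sum_eval₂_primitiveRoot_pow (hζ : IsPrimitiveRoot ζ N) (P : ℤ[T;T⁻¹]) :
    ∃ z : ℤ, ∑ k ∈ range N, LaurentPolynomial.eval₂ (Int.castRingHom K) (ζ ^ k) P = N * z := by
  induction P using LaurentPolynomial.induction_on' with
  | add P Q hP hQ =>
    obtain ⟨a, ha⟩ := hP
    obtain ⟨b, hb⟩ := hQ
    exact ⟨a + b, by simp only [map_add, sum_add_distrib, ha, hb, Int.cast_add, mul_add]⟩
  | C_mul_T n a =>
    refine ⟨if (N : ℤ) ∣ n then a else 0, ?_⟩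
    simp only [LaurentPolynomial.eval₂_C_mul_T, ← mul_sum, sum_zpow_primitiveRoot_pow hζ]
    split_ifs <;> simp [mul_comm]

end RootOfUnitySums

/-- The triples of integers in `[-m, m]` with sum zero; their number is the constant term of the
cube of `∑_{|j| ≤ m} T^j`. -/
noncomputable def zeroSumTriples (m : ℕ) : Finset (ℤ × ℤ × ℤ) :=
  {p ∈ Icc (-m : ℤ) m ×ˢ Icc (-m : ℤ) m ×ˢ Icc (-m : ℤ) m | p.1 + p.2.1 + p.2.2 = 0}

lemma sum_abs_Icc_neg (m : ℕ) : ∑ i ∈ Icc (-m : ℤ) m, |i| = m * (m + 1) := by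
  rw [sum_Icc_of_even_eq_range fun i => abs_neg i]
  have hgauss : (∑ i ∈ range (m + 1), (i : ℤ)) * 2 = (m + 1) * m := by
    have h := congrArg (Nat.cast : ℕ → ℤ) (sum_range_id_mul_two (m + 1))
    rw [Nat.add_sub_cancel] at h
    push_cast at h
    exact h
  simp only [Nat.abs_cast, abs_zero, sub_zero, nsmul_eq_mul]
  linear_combination hgauss

lemma card_pairs_add_eq_zero {m : ℕ} {i : ℤ} (hi : i ∈ Icc (-m : ℤ) m) :
    (#{p ∈ Icc (-m : ℤ) m ×ˢ Icc (-m : ℤ) m | i + p.1 + p.2 = 0} : ℤ) = 2 * m + 1 - |i| := by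
  rw [mem_Icc] at hi
  have hcard : #{p ∈ Icc (-m : ℤ) m ×ˢ Icc (-m : ℤ) m | i + p.1 + p.2 = 0} =
      #(Icc (max (-m : ℤ) (-m - i)) (min (m : ℤ) (m - i))) := by
    refine card_nbij' Prod.fst (fun j => (j, -i - j)) ?_ ?_ ?_ ?_
    all_goals
      intro p hp
      simp only [coe_filter, mem_product, mem_Icc, Set.mem_ofPred_eq, coe_Icc, Set.mem_Icc,
        sup_le_iff, le_inf_iff, Prod.ext_iff] at hp ⊢
    all_goals lia
  rw [hcard, Int.card_Icc, abs_eq_max_neg]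
  lia

lemma four_mul_card_zeroSumTriples (m : ℕ) :
    4 * (#(zeroSumTriples m) : ℤ) = 3 * (2 * m + 1) ^ 2 + 1 := by
  have hcard : (#(zeroSumTriples m) : ℤ) = ∑ i ∈ Icc (-m : ℤ) m, (2 * m + 1 - |i|) := by
    rw [zeroSumTriples, card_filter, sum_product, Nat.cast_sum]
    simp only [← card_filter]
    exact sum_congr rfl fun i hi => card_pairs_add_eq_zero hi
  have hlen : (#(Icc (-m : ℤ) m) : ℤ) = 2 * m + 1 := by
    rw [Int.card_Icc]
    lia
  rw [hcard, sum_sub_distrib, sum_abs_Icc_neg, sum_const, nsmul_eq_mul, hlen]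
  ring

/-- The polynomial `∏_{|j| ≤ m} (x + T^j)`; the substitution `T ↦ ζ_N^k` turns it into
`det (x + Z^k)`. -/
noncomputable def phasePoly (m : ℕ) : ℤ[T;T⁻¹][X] :=
  ∏ j ∈ Icc (-m : ℤ) m, (X + C (T j))

lemma prod_T_Icc_neg (m : ℕ) : ∏ j ∈ Icc (-m : ℤ) m, (T j : ℤ[T;T⁻¹]) = 1 := by
  refine prod_involution (fun j _ => -j) (fun j _ => ?_) (fun j _ hj hneg => hj ?_)
    (fun j hj => ?_) fun j _ => neg_neg j
  · rw [← LaurentPolynomial.T_add, add_neg_cancel, LaurentPolynomial.T_zero]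
  · rw [show j = 0 by lia, LaurentPolynomial.T_zero]
  · rw [mem_Icc] at hj ⊢
    lia

lemma coeff_zero_phasePoly (m : ℕ) : (phasePoly m).coeff 0 = 1 := by
  simp [phasePoly, coeff_zero_prod, prod_T_Icc_neg]

lemma coeff_one_phasePoly (m : ℕ) : (phasePoly m).coeff 1 = ∑ j ∈ Icc (-m : ℤ) m, T j := by
  have herase {j : ℤ} (hj : j ∈ Icc (-m : ℤ) m) :
      ∏ l ∈ (Icc (-m : ℤ) m).erase j, (T l : ℤ[T;T⁻¹]) = T (-j) := by
    rw [← mul_one (T (-j)), ← prod_T_Icc_neg m, ← mul_prod_erase _ _ hj, ← mul_assoc,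
      ← LaurentPolynomial.T_add, neg_add_cancel, LaurentPolynomial.T_zero, one_mul]
  rw [phasePoly, coeff_one_prod_X_add_C, sum_congr rfl fun j hj => herase hj]
  exact sum_nbij' Neg.neg Neg.neg (fun j hj => by rw [mem_Icc] at hj ⊢; lia)
    (fun j hj => by rw [mem_Icc] at hj ⊢; lia) (by simp) (by simp) (by simp)

lemma coeff_one_phasePoly_pow_three (m : ℕ) :
    (phasePoly m).coeff 1 ^ 3 =
      ∑ p ∈ Icc (-m : ℤ) m ×ˢ Icc (-m : ℤ) m ×ˢ Icc (-m : ℤ) m, T (p.1 + p.2.1 + p.2.2) := by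
  simp only [coeff_one_phasePoly, pow_succ', pow_zero, mul_one, sum_mul_sum, ← sum_product',
    LaurentPolynomial.T_add, mul_assoc]

lemma sum_eval₂_coeff_one_phasePoly_pow_three {K : Type*} [CommRing K] [IsDomain K] {ζ : Kˣ}
    {m N : ℕ} (hζ : IsPrimitiveRoot ζ N) (hN : 3 * m < N) :
    ∑ k ∈ range N,
      LaurentPolynomial.eval₂ (Int.castRingHom K) (ζ ^ k) ((phasePoly m).coeff 1 ^ 3) =
        N * #(zeroSumTriples m) := by
  have hdvd {p : ℤ × ℤ × ℤ} (hp : p ∈ Icc (-m : ℤ) m ×ˢ Icc (-m : ℤ) m ×ˢ Icc (-m : ℤ) m) :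
      (N : ℤ) ∣ p.1 + p.2.1 + p.2.2 ↔ p.1 + p.2.1 + p.2.2 = 0 := by
    simp only [mem_product, mem_Icc] at hp
    refine ⟨fun h => Int.eq_zero_of_abs_lt_dvd h ?_, fun h => h ▸ dvd_zero _⟩
    rw [abs_lt]
    lia
  simp only [coeff_one_phasePoly_pow_three, map_sum, LaurentPolynomial.eval₂_T]
  rw [sum_comm]
  simp only [sum_zpow_primitiveRoot_pow hζ]
  rw [sum_congr rfl fun p hp => if_congr (hdvd hp) rfl rfl, ← sum_filter, sum_const, nsmul_eq_mul,
    mul_comm, zeroSumTriples]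

/-- The root of unity `ζ_N` as a unit of `ℂ`, so that it can be substituted into Laurent
polynomials. -/
noncomputable def zetaUnit (N : ℕ) : ℂˣ := Units.mk0 (zetaN N) (Complex.exp_ne_zero _)

lemma isPrimitiveRoot_zetaUnit {N : ℕ} (hN : N ≠ 0) : IsPrimitiveRoot (zetaUnit N) N :=
  IsPrimitiveRoot.coe_units_iff.1 (Complex.isPrimitiveRoot_exp N hN)

/-- The substitution `T ↦ ζ_N^k`. -/
noncomputable def phaseEval (N k : ℕ) : ℤ[T;T⁻¹] →+* ℂ :=
  LaurentPolynomial.eval₂ (Int.castRingHom ℂ) (zetaUnit N ^ k)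

lemma two_mul_add_one_ne_zero (m : ℕ) : (2 * m + 1 : ℂ) ≠ 0 := by
  exact_mod_cast (2 * m).succ_ne_zero

lemma coinM_eq (m : ℕ) : coinM m = of (fun _ _ => 2 / (2 * m + 1 : ℂ)) - 1 := by
  have hL := two_mul_add_one_ne_zero m
  ext i j
  by_cases h : i = j
  · simp only [coinM, h, ↓reduceIte, Matrix.sub_apply, of_apply, one_apply_eq]
    field_simp
    ring
  · simp [coinM, h]

lemma prod_fin_sub_eq_prod_Icc {M : Type*} [CommMonoid M] (m : ℕ) (f : ℤ → M) :
    ∏ i : Fin (2 * m + 1), f (m - (i : ℕ)) = ∏ j ∈ Icc (-m : ℤ) m, f j := by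
  refine prod_bij (fun i _ => (m : ℤ) - (i : ℕ)) (fun i _ => ?_) (fun i _ j _ h => ?_)
    (fun j hj => ?_) fun _ _ => rfl
  · have := i.isLt
    rw [mem_Icc]
    omega
  · have hval : (i : ℕ) = j := by omega
    exact Fin.ext hval
  · rw [mem_Icc] at hj
    exact ⟨⟨(m - j).toNat, by lia⟩, mem_univ _, by simp only [Int.ofNat_toNat]; lia⟩

lemma coeff_neg_fMk (m N k r : ℕ) :
    (-fMk m N k).coeff r =
      (2 * m + 1 - 2 * r) / (2 * m + 1) * phaseEval N k ((phasePoly m).coeff r) := by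
  have hL := two_mul_add_one_ne_zero m
  have hphase (j : ℤ) : zetaN N ^ (j * k) = phaseEval N k (T j) := by
    rw [phaseEval, LaurentPolynomial.eval₂_T, ← zpow_natCast, ← _root_.zpow_mul, mul_comm,
      Units.val_zpow_eq_zpow_val, zetaUnit]
    rfl
  have hprod : ∏ i : Fin (2 * m + 1), (X + C (zetaN N ^ (((m : ℤ) - (i : ℕ)) * (k : ℤ)))) =
      (phasePoly m).map (phaseEval N k) := by
    rw [prod_fin_sub_eq_prod_Icc m fun j => X + C (zetaN N ^ (j * (k : ℤ))), phasePoly,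
      Polynomial.map_prod]
    simp [hphase]
  rw [coeff_neg, fMk, ZmatPow, coinM_eq, coeff_charpoly_diagonal_mul_const_sub_one, hprod,
    coeff_map, Fintype.card_fin]
  push_cast
  rw [← neg_mul]
  congr 1
  field_simp
  ring

lemma coeff_zero_neg_fMk (m N k : ℕ) : (-fMk m N k).coeff 0 = 1 := by
  have hL := two_mul_add_one_ne_zero m
  rw [coeff_neg_fMk, coeff_zero_phasePoly, map_one]
  simp [hL]

section Moments

variable {m N : ℕ}

lemma exists_int_sum_of_mul_eq_phaseEval (hN : N ≠ 0) (hdvd : (2 * m + 1) ^ 2 ∣ N) {g : ℕ → ℂ}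
    (P : ℤ[T;T⁻¹]) (hg : ∀ k, (2 * m + 1) ^ 2 * g k = phaseEval N k P) :
    ∃ z : ℤ, ∑ k ∈ range N, g k = (z : ℂ) := by
  obtain ⟨z, hz⟩ := exists_int_sum_eval₂_primitiveRoot_pow (isPrimitiveRoot_zetaUnit hN) P
  obtain ⟨M, hM⟩ := hdvd
  refine ⟨M * z, mul_left_cancel₀ (pow_ne_zero 2 (two_mul_add_one_ne_zero m)) ?_⟩
  rw [mul_sum, sum_congr rfl fun k _ => hg k]
  refine hz.trans ?_
  rw [hM]
  push_cast
  ring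

lemma exists_int_sum_coeff_one_neg_fMk (hN : N ≠ 0) (hdvd : (2 * m + 1) ^ 2 ∣ N) :
    ∃ z : ℤ, ∑ k ∈ range N, (-fMk m N k).coeff 1 = (z : ℂ) := by
  have hL := two_mul_add_one_ne_zero m
  refine exists_int_sum_of_mul_eq_phaseEval hN hdvd
    ((2 * m + 1) * (2 * m - 1) * (phasePoly m).coeff 1) fun k => ?_
  simp only [coeff_neg_fMk, map_sub, map_mul, map_add, map_natCast, map_ofNat, map_one]
  push_cast
  field_simp
  ring

lemma exists_int_sum_two_mul_coeff_two_neg_fMk_sub (hN : N ≠ 0) (hdvd : (2 * m + 1) ^ 2 ∣ N) :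
    ∃ z : ℤ, ∑ k ∈ range N, (2 * (-fMk m N k).coeff 2 - (-fMk m N k).coeff 1 ^ 2) = (z : ℂ) := by
  have hL := two_mul_add_one_ne_zero m
  refine exists_int_sum_of_mul_eq_phaseEval hN hdvd
    (2 * (2 * m + 1) * (2 * m - 3) * (phasePoly m).coeff 2 -
      ((2 * m - 1) * (phasePoly m).coeff 1) ^ 2) fun k => ?_
  simp only [coeff_neg_fMk, map_sub, map_mul, map_pow, map_add, map_natCast, map_ofNat, map_one]
  push_cast
  field_simp
  ring

lemma exists_int_sum_three_mul_coeff_three_neg_fMk_sub (hN : N ≠ 0) (hdvd : (2 * m + 1) ^ 2 ∣ N) :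
    ∃ z : ℤ, ∑ k ∈ range N,
      (3 * (-fMk m N k).coeff 3 - 3 * (-fMk m N k).coeff 1 * (-fMk m N k).coeff 2) = (z : ℂ) := by
  have hL := two_mul_add_one_ne_zero m
  refine exists_int_sum_of_mul_eq_phaseEval hN hdvd
    (3 * (2 * m + 1) * (2 * m - 5) * (phasePoly m).coeff 3 -
      3 * (2 * m - 1) * (2 * m - 3) * ((phasePoly m).coeff 1 * (phasePoly m).coeff 2)) fun k => ?_
  simp only [coeff_neg_fMk, map_sub, map_mul, map_add, map_natCast, map_ofNat, map_one]
  push_cast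
  field_simp
  ring

lemma sum_coeff_one_neg_fMk_pow_three (hN : 3 * m < N) :
    ∑ k ∈ range N, (-fMk m N k).coeff 1 ^ 3 =
      ((2 * m - 1) / (2 * m + 1)) ^ 3 * (N * #(zeroSumTriples m)) := by
  rw [← sum_eval₂_coeff_one_phasePoly_pow_three (isPrimitiveRoot_zetaUnit (by lia)) hN, mul_sum]
  refine sum_congr rfl fun k _ => ?_
  rw [coeff_neg_fMk, mul_pow, map_pow, phaseEval]
  push_cast
  ring

end Moments

lemma coeff_prod_neg_fMk (m N r : ℕ) :
    (∏ k ∈ range N, -fMk m N k).coeff r = (-1) ^ N * (fM m N).coeff r := by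
  rw [prod_neg, card_range, ← fM, ← C_1, ← C_neg, ← C_pow, coeff_C_mul]

lemma exists_int_mul_coeff_three_prod_neg_fMk {m M : ℕ} (hM : M ≠ 0) :
    ∃ z : ℤ, 6 * (2 * m + 1) *
        (∏ k ∈ range ((2 * m + 1) ^ 2 * M), -fMk m ((2 * m + 1) ^ 2 * M) k).coeff 3 =
      (2 * m + 1) * (z : ℂ) + 2 * (2 * m - 1) ^ 3 * #(zeroSumTriples m) * M := by
  set N := (2 * m + 1) ^ 2 * M with hN
  have hN_cast : (N : ℂ) = (2 * m + 1) ^ 2 * M := by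
    rw [hN]
    push_cast
    rfl
  have hlt : 3 * m < N := by nlinarith [Nat.pos_of_ne_zero hM]
  have hdvd : (2 * m + 1) ^ 2 ∣ N := dvd_mul_right _ _
  have hL := two_mul_add_one_ne_zero m
  obtain ⟨s₁, hs₁⟩ := exists_int_sum_coeff_one_neg_fMk (by lia) hdvd
  obtain ⟨s₂, hs₂⟩ := exists_int_sum_two_mul_coeff_two_neg_fMk_sub (by lia) hdvd
  obtain ⟨s₃, hs₃⟩ := exists_int_sum_three_mul_coeff_three_neg_fMk_sub (by lia) hdvd
  have hprod := six_mul_coeff_three_prod (range N) (fun k => -fMk m N k)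
    fun k _ => coeff_zero_neg_fMk m N k
  rw [sum_add_distrib, hs₁, hs₂, hs₃, sum_coeff_one_neg_fMk_pow_three hlt, hN_cast] at hprod
  refine ⟨s₁ ^ 3 + 3 * s₁ * s₂ + 2 * s₃, ?_⟩
  rw [mul_right_comm, hprod]
  push_cast
  field_simp
  ring

lemma isCoprime_two_mul_sub_one_pow_mul_card_zeroSumTriples (m : ℕ) :
    IsCoprime (2 * m + 1 : ℤ) (2 * (2 * m - 1) ^ 3 * #(zeroSumTriples m)) := by
  have htwo : IsCoprime (2 * m + 1 : ℤ) 2 := ⟨1, -m, by ring⟩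
  have hsub : IsCoprime (2 * m + 1 : ℤ) (2 * m - 1) := ⟨m, -(m + 1), by ring⟩
  have hcard : IsCoprime (2 * m + 1 : ℤ) #(zeroSumTriples m) :=
    ⟨-3 * (2 * m + 1), 4, by linear_combination four_mul_card_zeroSumTriples m⟩
  exact (htwo.mul_right hsub.pow_right).mul_right hcard

theorem stmt11_general (m N : ℕ) (hdvd : (2 * m + 1) ^ 2 ∣ N) (hndvd : ¬ (2 * m + 1) ^ 3 ∣ N) :
    ¬ ∃ z : ℤ, (fM m N).coeff 3 = (z : ℂ) := by
  rintro ⟨c, hc⟩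
  obtain ⟨M, rfl⟩ := hdvd
  have hM : ¬ 2 * m + 1 ∣ M := fun h => hndvd (by rw [pow_succ]; exact mul_dvd_mul_left _ h)
  have hM_ne : M ≠ 0 := fun h => hM (h ▸ dvd_zero _)
  obtain ⟨z, hz⟩ := exists_int_mul_coeff_three_prod_neg_fMk (m := m) hM_ne
  rw [coeff_prod_neg_fMk, hc] at hz
  have hint : 6 * (2 * m + 1) * ((-1) ^ ((2 * m + 1) ^ 2 * M) * c) =
      (2 * m + 1) * z + 2 * (2 * m - 1) ^ 3 * #(zeroSumTriples m) * M := by exact_mod_cast hz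
  have hL_dvd : (2 * m + 1 : ℤ) ∣ 2 * (2 * m - 1) ^ 3 * #(zeroSumTriples m) * M :=
    ⟨6 * ((-1) ^ ((2 * m + 1) ^ 2 * M) * c) - z, by linear_combination -hint⟩
  have hcoprime := isCoprime_two_mul_sub_one_pow_mul_card_zeroSumTriples m
  exact hM (by exact_mod_cast hcoprime.dvd_of_dvd_mul_left hL_dvd)

/-- For an odd prime `L = 2m+1 ≥ 3`, the polynomial `f^{M,L}_{L²}` does not
have all integer coefficients; in particular its coefficient of `x³` is not an integer. -/
theorem stmt11 (m : ℕ) (hm : 1 ≤ m) (hp : Nat.Prime (2*m+1)) :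
    (¬ ∀ i : ℕ, ∃ z : ℤ, (fM m ((2*m+1)^2)).coeff i = (z : ℂ)) ∧
    ¬ ∃ z : ℤ, (fM m ((2*m+1)^2)).coeff 3 = (z : ℂ) := by
  have h := stmt11_general m _ dvd_rfl (by rw [Nat.pow_dvd_pow_iff_le_right (by lia)]; lia)
  exact ⟨fun hall => h (hall 3), h⟩
end

section
/- Let L = 2m+1 ≥ 3 be an odd integer and let n ≥ 2 be an integer coprime to L. Then the polynomial f^{F,L}_n(x) does not have all integer coefficients; that is, some coefficient of f^{F,L}_n (in particular its coefficient of x) is not an integer. -/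
open Matrix Polynomial

/-!
Since `A² = 1`, the inverse of `Zᵏ A` is `A Z⁻ᵏ`, and since `det Zᵏ = 1`, this turns the
characteristic polynomial into `f_{n,k} = -det A · det (1 - x A Z⁻ᵏ)`. The coefficient of `x` in
`f_n` is therefore, up to sign, `∑ₖ tr (A Z⁻ᵏ)`. Summing over `k` first, the orthogonality relations
for the `n`-th roots of unity keep only the diagonal entries of `A` with index `i ≡ m (mod n)`.
There are `2⌊m/n⌋ + 1` of them, each equal to `2/L` except for the central one, which is `2/L - 1`,
so the coefficient is `±(n - 2n(2⌊m/n⌋ + 1)/L)`. As `L` is odd, this is an integer exactly when `L`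
divides `n(2⌊m/n⌋ + 1) = L + (n - 2(m mod n) - 1)`. If `n ≤ m`, the last bracket is smaller than `L`
in absolute value, so it vanishes and `n` divides `L`; if `n > m`, then `⌊m/n⌋ = 0` and `L`
divides `n`.
-/

theorem natCast_div_mem_range_intCast_iff {K : Type*} [DivisionRing K] [CharZero K] {a b : ℕ}
    (hb : b ≠ 0) : (a / b : K) ∈ (Int.castRingHom K).range ↔ b ∣ a := by
  have hbK : (b : K) ≠ 0 := Nat.cast_ne_zero.2 hb
  simp only [RingHom.mem_range, eq_intCast, eq_div_iff hbK]
  rw [← Int.natCast_dvd_natCast]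
  constructor
  · rintro ⟨z, hz⟩
    exact Dvd.intro_left z (by exact_mod_cast hz)
  · rintro ⟨z, hz⟩
    exact ⟨z, by exact_mod_cast (hz.trans (mul_comm _ _)).symm⟩

theorem count_modEq_two_mul_add_one (m : ℕ) {n : ℕ} (hn : n ≠ 0) :
    (2 * m + 1).count (· ≡ m [MOD n]) = 2 * (m / n) + 1 := by
  have hpos : 0 < n := Nat.pos_of_ne_zero hn
  have hr : m % n < n := Nat.mod_lt m hpos
  have hm : 2 * m + 1 = 2 * (m % n) + 1 + n * (2 * (m / n)) := by
    nth_rw 1 [← Nat.mod_add_div m n]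
    ring
  rw [Nat.count_modEq_card _ hpos, hm, Nat.add_mul_div_left _ _ hpos, Nat.add_mul_mod_self_left]
  rcases lt_or_ge (2 * (m % n) + 1) n with hlt | hge
  · rw [Nat.div_eq_of_lt hlt, Nat.mod_eq_of_lt hlt, if_pos (by lia)]
    lia
  · have hsub : 2 * (m % n) + 1 - n < n := by lia
    rw [Nat.div_eq_sub_div hpos hge, Nat.mod_eq_sub_mod hge, Nat.div_eq_of_lt hsub,
      Nat.mod_eq_of_lt hsub, if_neg (by lia)]
    lia

theorem mul_two_mul_div_add_one_eq_of_dvd {m n : ℕ} (h : n ∣ 2 * m + 1) :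
    n * (2 * (m / n) + 1) = 2 * m + 1 := by
  obtain ⟨t, ht⟩ := h
  obtain ⟨⟨u, rfl⟩, ⟨s, rfl⟩⟩ := Nat.odd_mul.1 (ht ▸ odd_two_mul_add_one m)
  have hm : m = u + (2 * u + 1) * s := by linarith
  have hdiv : m / (2 * u + 1) = s := by
    rw [hm, Nat.add_mul_div_left _ _ (Nat.succ_pos _), Nat.div_eq_of_lt (by lia), zero_add]
  rw [hdiv, ht]

theorem two_mul_add_one_dvd_mul_two_mul_div_add_one_iff (m : ℕ) {n : ℕ} (hn : n ≠ 0) :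
    2 * m + 1 ∣ n * (2 * (m / n) + 1) ↔ n ∣ 2 * m + 1 ∨ 2 * m + 1 ∣ n := by
  constructor
  · intro h
    rcases lt_or_ge m n with hmn | hnm
    · rw [Nat.div_eq_of_lt hmn] at h
      exact Or.inr (by simpa using h)
    · left
      have hr : m % n < n := Nat.mod_lt m (Nat.pos_of_ne_zero hn)
      have hm : (n * (m / n : ℕ) + (m % n : ℕ) : ℤ) = m := by exact_mod_cast Nat.div_add_mod m n
      have hrem : (2 * m + 1 : ℤ) ∣ n - 2 * (m % n : ℕ) - 1 := by
        have h' : (2 * m + 1 : ℤ) ∣ n * (2 * (m / n : ℕ) + 1) := by exact_mod_cast h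
        have hsub : (n : ℤ) - 2 * (m % n : ℕ) - 1 = n * (2 * (m / n : ℕ) + 1) - (2 * m + 1) := by
          linear_combination -2 * hm
        exact hsub ▸ dvd_sub_self_right.2 h'
      have hzero : (n : ℤ) - 2 * (m % n : ℕ) - 1 = 0 :=
        Int.eq_zero_of_abs_lt_dvd hrem (by rw [abs_lt]; lia)
      refine ⟨2 * (m / n) + 1, ?_⟩
      rw [← Int.natCast_inj]
      simp only [Nat.cast_mul, Nat.cast_add, Nat.cast_ofNat, Nat.cast_one]
      linear_combination -hzero - 2 * hm
  · rintro (h | h)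
    · exact (mul_two_mul_div_add_one_eq_of_dvd h).symm.dvd
    · exact h.mul_right _

theorem two_mul_sub_mul_self_eq_one {R : Type*} [Ring R] {e p : R} (he : e * e = e)
    (hp : p * p = 1) (hep : e * p = e) (hpe : p * e = e) : (2 * e - p) * (2 * e - p) = 1 := by
  calc (2 * e - p) * (2 * e - p)
      = 4 * (e * e) - 2 * (e * p) - 2 * (p * e) + p * p := by noncomm_ring
    _ = 1 := by rw [he, hp, hep, hpe]; noncomm_ring

section MeanMatrix

variable (ι K : Type*) [Fintype ι] [DivisionRing K]

/-- The matrix of the projection onto the constant vectors along those of sum zero, which replaces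
every coordinate by the mean. It lets us write a Grover coin as `2 * meanMatrix - P` with `P` a
permutation matrix. It is zero when `card ι = 0` in `K`. -/
def meanMatrix : Matrix ι ι K := .of fun _ _ => (Fintype.card ι : K)⁻¹

variable {ι K}

theorem meanMatrix_mul_self (h : (Fintype.card ι : K) ≠ 0) :
    meanMatrix ι K * meanMatrix ι K = meanMatrix ι K := by
  ext i j
  simp [meanMatrix, Matrix.mul_apply, h]

variable [DecidableEq ι]

theorem permMatrix_mul_meanMatrix (σ : Equiv.Perm ι) :
    σ.permMatrix K * meanMatrix ι K = meanMatrix ι K :=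
  PEquiv.toMatrix_toPEquiv_mul _ _

theorem meanMatrix_mul_permMatrix (σ : Equiv.Perm ι) :
    meanMatrix ι K * σ.permMatrix K = meanMatrix ι K :=
  PEquiv.mul_toMatrix_toPEquiv _ _

end MeanMatrix

theorem charpoly_eq_charpolyRev_of_mul_eq_one {ι R : Type*} [Fintype ι] [DecidableEq ι]
    [CommRing R] {M N : Matrix ι ι R} (h : M * N = 1) :
    M.charpoly = (-1) ^ Fintype.card ι * C M.det * N.charpolyRev := by
  rw [← inv_eq_left_inv h, charpoly_inv N (.of_mul_eq_one_right M h), ← det_nonsing_inv]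

theorem coeff_one_prod_of_coeff_zero_eq_one {ι R : Type*} [CommSemiring R] {s : Finset ι}
    {p : ι → R[X]} (h : ∀ i ∈ s, (p i).coeff 0 = 1) :
    (∏ i ∈ s, p i).coeff 1 = ∑ i ∈ s, (p i).coeff 1 := by
  classical
  induction s using Finset.induction_on with
  | empty => simp [coeff_one]
  | insert i s hi ih =>
    obtain ⟨h_i, h_s⟩ := Finset.forall_mem_insert _ _ _ |>.1 h
    have hprod : (∏ j ∈ s, p j).coeff 0 = 1 := by
      rw [coeff_zero_prod, Finset.prod_eq_one h_s]
    rw [Finset.prod_insert hi, Finset.sum_insert hi, mul_coeff_one, h_i, hprod, ih h_s, one_mul,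
      mul_one, add_comm]

theorem sum_range_zpow_mul_eq_ite {K : Type*} [Field K] {ζ : K} {n : ℕ}
    (hζ : IsPrimitiveRoot ζ n) (a : ℤ) :
    ∑ k ∈ Finset.range n, ζ ^ (a * k) = if (n : ℤ) ∣ a then (n : K) else 0 := by
  simp only [_root_.zpow_mul, zpow_natCast]
  split_ifs with h
  · simp [(hζ.zpow_eq_one_iff_dvd a).2 h]
  · have hne : ζ ^ a ≠ 1 := mt (hζ.zpow_eq_one_iff_dvd a).1 h
    have hpow : (ζ ^ a) ^ n = 1 := by
      rw [← zpow_natCast, zpow_comm, zpow_natCast, hζ.pow_eq_one, _root_.one_zpow]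
    rw [geom_sum_eq hne, hpow, sub_self, zero_div]

section Walk

variable (m n : ℕ)

theorem coinF_apply (i j : Fin (2 * m + 1)) :
    coinF m i j = 2 / (2 * m + 1 : ℕ) - if i.rev = j then 1 else 0 := by
  have hL : (2 * m + 1 : ℂ) ≠ 0 := by exact_mod_cast Nat.succ_ne_zero (2 * m)
  have hrev : (i : ℕ) + j = 2 * m ↔ i.rev = j := by
    rw [Fin.ext_iff, Fin.val_rev]
    lia
  simp only [coinF, hrev]
  push_cast
  split_ifs
  · field_simp
    ring
  · rw [sub_zero]

theorem coinF_apply_self (i : Fin (2 * m + 1)) :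
    coinF m i i = 2 / (2 * m + 1 : ℕ) - if (i : ℕ) = m then 1 else 0 := by
  have hmid : i.rev = i ↔ (i : ℕ) = m := by
    rw [Fin.ext_iff, Fin.val_rev]
    lia
  simp only [coinF_apply, hmid]

theorem coinF_eq_two_mul_meanMatrix_sub_permMatrix :
    coinF m = 2 * meanMatrix (Fin (2 * m + 1)) ℂ - Fin.revPerm.permMatrix ℂ := by
  ext i j
  rw [coinF_apply, two_mul (meanMatrix _ _), Matrix.sub_apply, Matrix.add_apply]
  simp [meanMatrix, ← two_mul, div_eq_mul_inv]

theorem coinF_mul_self : coinF m * coinF m = 1 := by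
  have hrev : (Fin.revPerm * Fin.revPerm : Equiv.Perm (Fin (2 * m + 1))) = 1 := by ext; simp
  rw [coinF_eq_two_mul_meanMatrix_sub_permMatrix]
  refine two_mul_sub_mul_self_eq_one (meanMatrix_mul_self ?_) ?_
    (meanMatrix_mul_permMatrix _) (permMatrix_mul_meanMatrix _)
  · simp only [Fintype.card_fin, ne_eq, Nat.cast_eq_zero, Nat.succ_ne_zero, not_false_eq_true]
  · rw [← permMatrix_mul, hrev, permMatrix_one]

theorem det_coinF_mul_self : (coinF m).det * (coinF m).det = 1 := by
  rw [← det_mul, coinF_mul_self, det_one]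

theorem zetaN_ne_zero : zetaN n ≠ 0 := Complex.exp_ne_zero _

theorem ZmatPow_mul_ZmatPow_neg (k : ℤ) : ZmatPow n m k * ZmatPow n m (-k) = 1 := by
  simp only [ZmatPow, diagonal_mul_diagonal, ← zpow_add₀ (zetaN_ne_zero n), mul_neg,
    add_neg_cancel, zpow_zero, diagonal_one]

theorem det_ZmatPow (k : ℤ) : (ZmatPow n m k).det = 1 := by
  rw [ZmatPow, det_diagonal]
  refine Finset.prod_involution (fun i _ => i.rev) ?_ ?_ (by simp) (by simp)
  · intro i _
    rw [← zpow_add₀ (zetaN_ne_zero n), ← add_mul]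
    have hrev : (m : ℤ) - i + (m - (i.rev : ℕ)) = 0 := by
      rw [Fin.val_rev]
      have := i.isLt
      lia
    rw [hrev, zero_mul, zpow_zero]
  · intro i _ hi
    contrapose! hi
    have hmid : (m : ℤ) - i = 0 := by
      rw [Fin.ext_iff, Fin.val_rev] at hi
      lia
    rw [hmid, zero_mul, zpow_zero]

theorem fFk_eq_charpolyRev (k : ℤ) :
    fFk m n k = C (-(coinF m).det) * (coinF m * ZmatPow n m (-k)).charpolyRev := by
  have hinv : ZmatPow n m k * coinF m * (coinF m * ZmatPow n m (-k)) = 1 := by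
    rw [Matrix.mul_assoc, ← Matrix.mul_assoc (coinF m), coinF_mul_self, Matrix.one_mul,
      ZmatPow_mul_ZmatPow_neg]
  rw [fFk, charpoly_eq_charpolyRev_of_mul_eq_one hinv, det_mul, det_ZmatPow, one_mul,
    Fintype.card_fin, (odd_two_mul_add_one m).neg_one_pow, neg_one_mul, C_neg]

theorem coeff_one_fF_eq_sum_trace :
    (fF m n).coeff 1 =
      (-(coinF m).det) ^ n * -∑ k ∈ Finset.range n, (coinF m * ZmatPow n m (-k)).trace := by
  have hcoeff (k : ℕ) : (coinF m * ZmatPow n m (-k)).charpolyRev.coeff 0 = 1 := by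
    rw [coeff_zero_eq_eval_zero, eval_charpolyRev]
  simp only [fF, fFk_eq_charpolyRev, Finset.prod_mul_distrib, Finset.prod_const, Finset.card_range,
    ← C_pow, coeff_C_mul, coeff_one_prod_of_coeff_zero_eq_one fun k _ => hcoeff k,
    coeff_charpolyRev_eq_neg_trace, Finset.sum_neg_distrib]

variable {n}

theorem sum_ZmatPow_neg (hn : n ≠ 0) :
    ∑ k ∈ Finset.range n, ZmatPow n m (-k) =
      diagonal fun i : Fin (2 * m + 1) => if (i : ℕ) ≡ m [MOD n] then (n : ℂ) else 0 := by
  have hζ : IsPrimitiveRoot (zetaN n) n := Complex.isPrimitiveRoot_exp n hn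
  ext i j
  rw [Matrix.sum_apply]
  rcases eq_or_ne i j with rfl | hij
  · simp only [ZmatPow, diagonal_apply_eq, mul_neg, ← neg_mul, sum_range_zpow_mul_eq_ite hζ,
      dvd_neg, Nat.modEq_iff_dvd]
  · simp only [ZmatPow, diagonal_apply_ne _ hij, Finset.sum_const_zero]

theorem sum_ite_modEq_coinF_apply_self (hn : n ≠ 0) :
    ∑ i : Fin (2 * m + 1), (if (i : ℕ) ≡ m [MOD n] then coinF m i i else 0) =
      (2 * (m / n) + 1 : ℕ) * (2 / (2 * m + 1 : ℕ)) - 1 := by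
  simp only [coinF_apply_self]
  rw [Fin.sum_univ_eq_sum_range (fun i : ℕ => if i ≡ m [MOD n] then
    (2 / (2 * m + 1 : ℕ) - if i = m then 1 else 0 : ℂ) else 0), ← Finset.sum_filter,
    Finset.sum_sub_distrib, Finset.sum_const, ← Nat.count_eq_card_filter_range,
    count_modEq_two_mul_add_one m hn, nsmul_eq_mul, Finset.sum_ite_eq', if_pos]
  exact Finset.mem_filter.2 ⟨Finset.mem_range.2 (by lia), rfl⟩

theorem sum_trace_coinF_mul_ZmatPow_neg (hn : n ≠ 0) :
    ∑ k ∈ Finset.range n, (coinF m * ZmatPow n m (-k)).trace =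
      (2 * (n * (2 * (m / n) + 1)) : ℕ) / (2 * m + 1 : ℕ) - n := by
  calc ∑ k ∈ Finset.range n, (coinF m * ZmatPow n m (-k)).trace
      = (coinF m * ∑ k ∈ Finset.range n, ZmatPow n m (-k)).trace := by
        rw [Matrix.mul_sum, trace_sum]
    _ = (∑ i : Fin (2 * m + 1), if (i : ℕ) ≡ m [MOD n] then coinF m i i else 0) * n := by
        simp only [sum_ZmatPow_neg m hn, trace, diag_apply, mul_diagonal, mul_ite, mul_zero,
          Finset.sum_mul, ite_mul, zero_mul]
    _ = (2 * (n * (2 * (m / n) + 1)) : ℕ) / (2 * m + 1 : ℕ) - n := by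
        rw [sum_ite_modEq_coinF_apply_self m hn]
        push_cast
        ring

theorem coeff_one_fF (hn : n ≠ 0) :
    (fF m n).coeff 1 = (-(coinF m).det) ^ n *
      (n - (2 * (n * (2 * (m / n) + 1)) : ℕ) / (2 * m + 1 : ℕ)) := by
  rw [coeff_one_fF_eq_sum_trace, sum_trace_coinF_mul_ZmatPow_neg m hn, neg_sub]

end Walk

theorem stmt14_general (m n : ℕ) (hn : n ≠ 0) :
    (∃ z : ℤ, (fF m n).coeff 1 = (z : ℂ)) ↔ n ∣ 2 * m + 1 ∨ 2 * m + 1 ∣ n := by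
  set q : ℂ := (2 * (n * (2 * (m / n) + 1)) : ℕ) / (2 * m + 1 : ℕ)
  have hsign : (-(coinF m).det) ^ n = 1 ∨ (-(coinF m).det) ^ n = -1 := by
    rw [← mul_self_eq_one_iff, ← mul_pow, neg_mul_neg, det_coinF_mul_self, one_pow]
  calc (∃ z : ℤ, (fF m n).coeff 1 = z)
      ↔ (fF m n).coeff 1 ∈ (Int.castRingHom ℂ).range := by
        simp only [RingHom.mem_range, eq_intCast, eq_comm]
    _ ↔ n - q ∈ (Int.castRingHom ℂ).range := by
        rw [coeff_one_fF m hn]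
        rcases hsign with h | h
        · rw [h, one_mul]
        · rw [h, neg_one_mul, neg_mem_iff]
    _ ↔ q ∈ (Int.castRingHom ℂ).range := by
        rw [sub_eq_add_neg, add_mem_cancel_left (natCast_mem _ n), neg_mem_iff]
    _ ↔ 2 * m + 1 ∣ 2 * (n * (2 * (m / n) + 1)) :=
        natCast_div_mem_range_intCast_iff (Nat.succ_ne_zero _)
    _ ↔ 2 * m + 1 ∣ n * (2 * (m / n) + 1) :=
        Nat.Coprime.dvd_mul_left (by simp)
    _ ↔ n ∣ 2 * m + 1 ∨ 2 * m + 1 ∣ n := two_mul_add_one_dvd_mul_two_mul_div_add_one_iff m hn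

/-- For odd `L = 2m+1 ≥ 3` and `n ≥ 2` coprime to `L`, the polynomial
`f^{F,L}_n` does not have all integer coefficients; in particular its coefficient of `x`
is not an integer. -/
theorem stmt14 (m n : ℕ) (hm : 1 ≤ m) (hn : 2 ≤ n) (hcop : Nat.gcd n (2*m+1) = 1) :
    (¬ ∀ i : ℕ, ∃ z : ℤ, (fF m n).coeff i = (z : ℂ)) ∧
    ¬ ∃ z : ℤ, (fF m n).coeff 1 = (z : ℂ) := by
  have hcoeff : ¬ ∃ z : ℤ, (fF m n).coeff 1 = (z : ℂ) := by
    rw [stmt14_general m n (by lia)]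
    rintro (h | h)
    · exact Nat.not_coprime_of_dvd_of_dvd hn dvd_rfl h hcop
    · exact Nat.not_coprime_of_dvd_of_dvd (by lia) h dvd_rfl hcop
  exact ⟨fun h => hcoeff (h 1), hcoeff⟩
end
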